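/- arXiv:cs/0408068 — 3 statements merged into one kernel-verified Lean document; each statement's English description precedes it below -/
import Mathlib

section
/- There exists a constant C > 0 such that for all sufficiently large b > 1, for every point o ∈ ℝ₊² with D_δ(o) ⊆ ℝ₊², for every index 0 ≤ i < L, and for all points q ∈ Q_i and u ∈ R_i, one has X̂(q,u) ≤ X(q̃_i, ũ_i) ≤ C/(b·(log b)³), where X̂(q,u) is the area of (D₁(q) ∪ D₁(u))ᶜ ∩ D̂₁(o). -/
open MeasureTheory Real Set
open scoped ENNReal

noncomputable section

/-- The Euclidean plane ℝ². -/
abbrev Plane := EuclideanSpace ℝ (Fin 2)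

/-- The point in the plane with Cartesian coordinates `(x, y)`. -/
def pt (x y : ℝ) : Plane := (WithLp.equiv 2 (Fin 2 → ℝ)).symm ![x, y]

/-- `D p r` is the closed disk of radius `r` centered at `p`. -/
def D (p : Plane) (r : ℝ) : Set Plane := Metric.closedBall p r

/-- `X o q u` is the area of `D₁(o) \ (D₁(q) ∪ D₁(u))` (Lebesgue measure). -/
def X (o q u : Plane) : ℝ := (volume (D o 1 \ (D q 1 ∪ D u 1))).toReal

/-- `L = ⌊b^(1/3) (log b)²⌋`. -/
def L (b : ℝ) : ℕ := ⌊b ^ (1/3 : ℝ) * (Real.log b) ^ 2⌋₊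

/-- `δ = 1/(b^(1/3) log b)`. -/
def δ (b : ℝ) : ℝ := 1 / (b ^ (1/3 : ℝ) * Real.log b)

/-- `θb = π / L`. -/
def θb (b : ℝ) : ℝ := Real.pi / L b

/-- The point with polar coordinates `(r, θ)` relative to `o`. -/
def polarPt (o : Plane) (r θ : ℝ) : Plane := o + r • pt (Real.cos θ) (Real.sin θ)

/-- The sector `Q_i` of the disk `D_δ(o)`: points with polar coordinates `(r, θ)` relative
to `o` satisfying `0 < r ≤ δ` and `(i - 1/2)θ_b ≤ θ ≤ (i + 1/2)θ_b`. -/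
def Qsector (o : Plane) (b : ℝ) (i : ℕ) : Set Plane :=
  {p | ∃ r θ : ℝ, 0 < r ∧ r ≤ δ b ∧
    ((i : ℝ) - 1/2) * θb b ≤ θ ∧ θ ≤ ((i : ℝ) + 1/2) * θb b ∧ p = polarPt o r θ}

/-- The sector `R_i`, the reflection of `Q_i` through `o`: points with polar coordinates
`(r, θ)` relative to `o` satisfying `0 < r ≤ δ` and `(i - 1/2)θ_b ≤ θ - π ≤ (i + 1/2)θ_b`. -/
def Rsector (o : Plane) (b : ℝ) (i : ℕ) : Set Plane :=
  {p | ∃ r θ : ℝ, 0 < r ∧ r ≤ δ b ∧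
    ((i : ℝ) - 1/2) * θb b ≤ θ - Real.pi ∧ θ - Real.pi ≤ ((i : ℝ) + 1/2) * θb b ∧
    p = polarPt o r θ}

/-- The extreme point `q̃_i`, with polar coordinates `(δ, (i - 1/2)θ_b)` relative to `o`. -/
def qtil (o : Plane) (b : ℝ) (i : ℕ) : Plane := polarPt o (δ b) (((i : ℝ) - 1/2) * θb b)

/-- The extreme point `ũ_i`, with polar coordinates `(δ, (i + 1/2)θ_b + π)` relative to `o`. -/
def util (o : Plane) (b : ℝ) (i : ℕ) : Plane :=
  polarPt o (δ b) (((i : ℝ) + 1/2) * θb b + Real.pi)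

/-- The closed positive quadrant `ℝ₊²`. -/
def quad : Set Plane := {p | 0 ≤ p 0 ∧ 0 ≤ p 1}

/-- The truncated unit disk `D̂₁(o) = D₁(o) ∩ ℝ₊²`. -/
def Dhat (o : Plane) : Set Plane := D o 1 ∩ quad

/-- `X̂(q,u)` is the area of `(D₁(q) ∪ D₁(u))ᶜ ∩ D̂₁(o)`. -/
def Xhat (o q u : Plane) : ℝ := (volume (Dhat o \ (D q 1 ∪ D u 1))).toReal

/-- The reflection swapping two points `a`, `c` equidistant from `o`: a measure preserving isometry
fixing `o` which increases the distance between points that are closer to `a` than to `c`. -/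
lemma exists_reflection_swap (o a c : Plane) (h : dist a o = dist c o) :
    ∃ τ : Plane → Plane, MeasurePreserving τ ∧ Isometry τ ∧ τ o = o ∧ τ a = c ∧ τ c = a ∧
      ∀ x y, dist x a ≤ dist x c → dist y a ≤ dist y c → dist x y ≤ dist x (τ y) := by
  rw [dist_eq_norm, dist_eq_norm] at h
  set v : Plane := a - c with hv
  have hvo : (a - o) - (c - o) = v := by rw [hv]; abel
  let R := (ℝ ∙ v)ᗮ.reflection
  have hRa : R (a - o) = c - o := by
    have := Submodule.reflection_sub h
    rwa [hvo] at this
  have hRc : R (c - o) = a - o := by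
    rw [← hRa]; exact Submodule.reflection_reflection _ _
  have side : ∀ x, dist x a ≤ dist x c → 0 ≤ inner ℝ v (x - o) := by
    intro x hx
    have e1 : x - a = (x - o) - (a - o) := by abel
    have e2 : x - c = (x - o) - (c - o) := by abel
    rw [dist_eq_norm, dist_eq_norm, e1, e2] at hx
    have h2 := pow_le_pow_left₀ (norm_nonneg _) hx 2
    rw [norm_sub_sq_real (x - o), norm_sub_sq_real (x - o), h] at h2
    rw [← hvo, inner_sub_left, real_inner_comm, real_inner_comm (x - o) (c - o)]
    linarith
  refine ⟨fun x => R (x - o) + o, ?_, ?_, ?_, ?_, ?_, ?_⟩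
  · exact (measurePreserving_add_right volume o).comp
      (R.measurePreserving.comp (measurePreserving_sub_right volume o))
  · refine Isometry.of_dist_eq fun x y => ?_
    simp [R.dist_map]
  · simp
  · simp [hRa]
  · simp [hRc]
  · intro x y hx hy
    have hx' := side x hx
    have hy' := side y hy
    have e1 : x - y = (x - o) - (y - o) := by abel
    have e2 : x - (R (y - o) + o) = (x - o) - R (y - o) := by abel
    rw [dist_eq_norm, dist_eq_norm, e1, e2]
    refine (sq_le_sq₀ (norm_nonneg _) (norm_nonneg _)).1 ?_
    have hR : R (y - o) = (y - o) - (2 * (inner ℝ v (y - o) / ‖v‖ ^ 2)) • v := by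
      simp only [R, Submodule.reflection_orthogonal_apply, Submodule.reflection_singleton_apply]
      simp [two_smul, two_mul, add_smul]
    rw [norm_sub_sq_real (x - o), norm_sub_sq_real (x - o), R.norm_map, hR, inner_sub_right _ (y - o), inner_smul_right,
      real_inner_comm v (x - o)]
    have : 0 ≤ 2 * (inner ℝ v (y - o) / ‖v‖ ^ 2) * inner ℝ v (x - o) := by positivity
    linarith

lemma volume_D_diff_ne_top (o : Plane) (s : Set Plane) : volume (D o 1 \ s) ≠ ∞ :=
  ((measure_mono sdiff_subset).trans_lt measure_closedBall_lt_top).ne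

/-- `X` is invariant under measure preserving isometries fixing `o`. -/
lemma X_map {o : Plane} (q u : Plane) {τ : Plane → Plane} (hτ : MeasurePreserving τ)
    (hi : Isometry τ) (ho : τ o = o) : X o (τ q) (τ u) = X o q u := by
  have hD : ∀ p, τ ⁻¹' D (τ p) 1 = D p 1 := fun p => by
    ext x
    simp [D, hi.dist_eq]
  have hm : MeasurableSet (D o 1 \ (D (τ q) 1 ∪ D (τ u) 1)) :=
    Metric.isClosed_closedBall.measurableSet.diff
      (Metric.isClosed_closedBall.measurableSet.union Metric.isClosed_closedBall.measurableSet)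
  rw [X, ← hτ.measure_preimage hm.nullMeasurableSet, preimage_sdiff, preimage_union, hD, hD]
  nth_rewrite 1 [← ho]
  rw [hD, X]

/-- Moving `u` on a circle around `o` towards `q` increases `X o q u`. -/
lemma X_le_of_dist_le {o q u u' : Plane} (h : dist u o = dist u' o) (hq : dist q u ≤ dist q u') :
    X o q u' ≤ X o q u := by
  obtain ⟨τ, hτ, hi, ho, hu, hu', hfar⟩ := exists_reflection_swap o u u' h
  have hm : ∀ p, MeasurableSet (D p 1) := fun p => Metric.isClosed_closedBall.measurableSet
  refine ENNReal.toReal_mono (volume_D_diff_ne_top _ _) ?_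
  rw [← measure_inter_add_sdiff (D o 1 \ (D q 1 ∪ D u' 1)) (hm u),
    ← measure_inter_add_sdiff (D o 1 \ (D q 1 ∪ D u 1)) (hm u')]
  refine add_le_add ?_ (measure_mono fun x hx => ?_)
  · have hT : MeasurableSet ((D o 1 \ (D q 1 ∪ D u 1)) ∩ D u' 1) :=
      ((hm o).diff ((hm q).union (hm u))).inter (hm u')
    rw [← hτ.measure_preimage hT.nullMeasurableSet]
    refine measure_mono fun x hx => ?_
    have h1 : dist (τ x) o = dist x o := by rw [← hi.dist_eq x o, ho]
    have h2 : dist (τ x) u = dist x u' := by rw [← hi.dist_eq x u', hu']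
    have h3 : dist (τ x) u' = dist x u := by rw [← hi.dist_eq x u, hu]
    simp only [D, mem_inter_iff, mem_sdiff, mem_union, Metric.mem_closedBall, not_or, not_le,
      mem_preimage, h1, h2, h3] at hx ⊢
    have h4 := hfar q x hq (hx.2.trans hx.1.2.2.le)
    rw [dist_comm q, dist_comm q] at h4
    exact ⟨⟨hx.1.1, hx.1.2.1.trans_le h4, hx.1.2.2⟩, hx.2⟩
  · simp only [mem_sdiff, mem_union, not_or] at hx ⊢
    tauto

/-- For points on a circle around `o`, `X o q u` is antitone in the distance of `q` and `u`. -/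
lemma X_le_X_of_dist_le {o q u q' u' : Plane} {r : ℝ} (hq : dist q o = r) (hu : dist u o = r)
    (hq' : dist q' o = r) (hu' : dist u' o = r) (h : dist q' u' ≤ dist q u) :
    X o q u ≤ X o q' u' := by
  obtain ⟨τ, hτ, hi, ho, hqq, -⟩ := exists_reflection_swap o q q' (hq.trans hq'.symm)
  rw [← X_map q u hτ hi ho, hqq]
  refine X_le_of_dist_le ?_ ?_
  · rw [hu', ← hu, ← hi.dist_eq u o, ho]
  · rwa [← hqq, hi.dist_eq, hqq]

/-- Moving a center away from `o` along a ray shrinks the part of the disk around `o` it covers. -/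
lemma D_inter_polarPt_subset {o : Plane} {r s : ℝ} (hr : 0 < r) (hrs : r ≤ s) (θ : ℝ) :
    D o 1 ∩ D (polarPt o s θ) 1 ⊆ D (polarPt o r θ) 1 := by
  rintro x ⟨h1, h2⟩
  simp only [D, Metric.mem_closedBall'] at *
  have hs : 0 < s := hr.trans_le hrs
  have hseg : polarPt o r θ ∈ segment ℝ o (polarPt o s θ) := by
    refine ⟨1 - r / s, r / s, ?_, by positivity, by ring, ?_⟩
    · rw [sub_nonneg, div_le_one hs]; exact hrs
    · have e : r / s * s = r := by field_simp
      simp only [polarPt, smul_add, sub_smul, one_smul, smul_smul, e]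
      abel
  exact (convex_closedBall x 1).segment_subset h1 h2 hseg

lemma X_polarPt_mono {o : Plane} {r r' s s' α β : ℝ} (hr : 0 < r) (hrs : r ≤ s)
    (hr' : 0 < r') (hrs' : r' ≤ s') :
    X o (polarPt o r α) (polarPt o r' β) ≤ X o (polarPt o s α) (polarPt o s' β) := by
  refine ENNReal.toReal_mono (volume_D_diff_ne_top _ _) (measure_mono ?_)
  rintro x ⟨h1, h2⟩
  refine ⟨h1, fun h => h2 ?_⟩
  exact h.imp (fun h => D_inter_polarPt_subset hr hrs α ⟨h1, h⟩)
    (fun h => D_inter_polarPt_subset hr' hrs' β ⟨h1, h⟩)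

lemma norm_pt_sq (x y : ℝ) : ‖pt x y‖ ^ 2 = x ^ 2 + y ^ 2 := by
  simp [EuclideanSpace.norm_sq_eq, pt]

lemma pt_sub (x y x' y' : ℝ) : pt x y - pt x' y' = pt (x - x') (y - y') := by
  ext j
  fin_cases j <;> simp [pt]

lemma norm_pt_cos_sin (θ : ℝ) : ‖pt (cos θ) (sin θ)‖ = 1 := by
  rw [← sq_eq_sq₀ (norm_nonneg _) zero_le_one, norm_pt_sq, cos_sq_add_sin_sq, one_pow]

lemma norm_pt_cos_sin_sub_sq (α β : ℝ) :
    ‖pt (cos α) (sin α) - pt (cos β) (sin β)‖ ^ 2 = 2 - 2 * cos (α - β) := by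
  rw [pt_sub, norm_pt_sq, cos_sub]
  linear_combination cos_sq_add_sin_sq α + cos_sq_add_sin_sq β

lemma dist_polarPt_self (o : Plane) {r : ℝ} (hr : 0 ≤ r) (θ : ℝ) : dist (polarPt o r θ) o = r := by
  rw [dist_eq_norm, polarPt, add_sub_cancel_left, norm_smul, norm_pt_cos_sin, mul_one,
    norm_of_nonneg hr]

lemma dist_polarPt_sq (o : Plane) (r α β : ℝ) :
    dist (polarPt o r α) (polarPt o r β) ^ 2 = r ^ 2 * (2 - 2 * cos (α - β)) := by
  rw [dist_eq_norm, polarPt, polarPt, add_sub_add_left_eq_sub, ← smul_sub, norm_smul, mul_pow,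
    norm_pt_cos_sin_sub_sq, norm_eq_abs, sq_abs]

/-- Two points of a circle with directions in `[α, β]` and `[α, β] + π` are at least as far from
each other as the extreme points in directions `α` and `β + π`. -/
lemma dist_polarPt_extreme_le (o : Plane) {r α β θ φ : ℝ} (hαβ : β - α ≤ π)
    (h1 : α ≤ θ) (h2 : θ ≤ β) (h3 : α ≤ φ - π) (h4 : φ - π ≤ β) :
    dist (polarPt o r α) (polarPt o r (β + π)) ≤ dist (polarPt o r θ) (polarPt o r φ) := by
  refine (sq_le_sq₀ dist_nonneg dist_nonneg).1 ?_
  rw [dist_polarPt_sq, dist_polarPt_sq]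
  have e1 : cos (α - (β + π)) = -cos (β - α) := by
    rw [show α - (β + π) = -((β - α) + π) by ring, cos_neg, cos_add_pi]
  have e2 : cos (θ - φ) = -cos |φ - π - θ| := by
    rw [show θ - φ = -((φ - π - θ) + π) by ring, cos_neg, cos_add_pi, cos_abs]
  have h5 : |φ - π - θ| ≤ β - α := abs_le.2 ⟨by linarith, by linarith⟩
  have := cos_le_cos_of_nonneg_of_le_pi (abs_nonneg _) hαβ h5
  rw [e1, e2]
  gcongr

/-- Two boxes covering the part of a thin annulus inside the strip `|s| ≤ 2 d` have small area. -/
lemma volume_box_union_le {d : ℝ} (hd : 0 ≤ d) :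
    volume (Icc ![-(2 * d), 1 - 9 * d ^ 2] ![2 * d, 1] ∪
      Icc ![-(2 * d), -1] ![2 * d, -(1 - 9 * d ^ 2)]) ≤ ENNReal.ofReal (72 * d ^ 3) := by
  refine (measure_union_le _ _).trans ?_
  rw [Real.volume_Icc_pi, Real.volume_Icc_pi, Fin.prod_univ_two, Fin.prod_univ_two]
  simp only [Matrix.cons_val_zero, Matrix.cons_val_one]
  rw [← ENNReal.ofReal_mul (by linarith), ← ENNReal.ofReal_mul (by linarith),
    ← ENNReal.ofReal_add (by nlinarith [pow_nonneg hd 3]) (by nlinarith [pow_nonneg hd 3])]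
  exact ENNReal.ofReal_le_ofReal (by nlinarith)

lemma mem_box_union {d s t : ℝ} (hs : |s| ≤ 2 * d)
    (h1 : s ^ 2 + t ^ 2 ≤ 1) (h2 : 1 - 5 * d ^ 2 ≤ s ^ 2 + t ^ 2) :
    ![s, t] ∈ Icc ![-(2 * d), 1 - 9 * d ^ 2] ![2 * d, 1] ∪
      Icc ![-(2 * d), -1] ![2 * d, -(1 - 9 * d ^ 2)] := by
  have hs2 : s ^ 2 ≤ 4 * d ^ 2 := by
    rw [← sq_abs s]; nlinarith [abs_nonneg s]
  have ht1 : |t| ≤ 1 := by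
    rw [← sq_le_one_iff_abs_le_one]; nlinarith
  have ht2 : 1 - 9 * d ^ 2 ≤ |t| := by
    nlinarith [sq_abs t, abs_nonneg t, sq_nonneg d]
  rw [abs_le] at hs ht1
  rcases le_abs.1 ht2 with h | h
  · left
    simp [Pi.le_def, Fin.forall_fin_two, mem_Icc]
    exact ⟨⟨hs.1, by linarith⟩, hs.2, ht1.2⟩
  · right
    simp [Pi.le_def, Fin.forall_fin_two, mem_Icc]
    exact ⟨⟨hs.1, ht1.1⟩, hs.2, by linarith⟩

/-- If the unit vectors `e` and `e'` are at distance at most `d`, the disks centered at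
`o + d e` and `o - d e'` omit only a part of area `O(d ^ 3)` of the disk around `o`. -/
lemma X_le_of_nearly_antipodal {o e e' : Plane} {d : ℝ} (hd : 0 < d)
    (he : ‖e‖ = 1) (he' : ‖e'‖ = 1) (hee : ‖e - e'‖ ≤ d) :
    X o (o + d • e) (o - d • e') ≤ 72 * d ^ 3 := by
  obtain ⟨B, hB⟩ := Orthonormal.exists_orthonormalBasis_extension_of_card_eq (𝕜 := ℝ)
    (E := Plane) (ι := Fin 2) (by simp) (v := fun _ => e) (s := {0}) (by
      rw [orthonormal_iff_ite]
      rintro ⟨i, rfl⟩ ⟨j, rfl⟩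
      simp [he])
  have hB0 : B 0 = e := hB 0 rfl
  have hmp : MeasurePreserving (fun x : Plane => WithLp.ofLp (B.repr (x - o))) :=
    (PiLp.volume_preserving_ofLp (Fin 2)).comp
      (B.measurePreserving_repr.comp (measurePreserving_sub_right volume o))
  rw [X]
  refine ENNReal.toReal_le_of_le_ofReal (by positivity) (le_trans ?_ (volume_box_union_le hd.le))
  rw [← hmp.measure_preimage (measurableSet_Icc.union measurableSet_Icc).nullMeasurableSet]
  refine measure_mono ?_
  rintro x ⟨h1, h2⟩
  simp only [D, mem_union, Metric.mem_closedBall, not_or, not_le, dist_eq_norm] at h1 h2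
  obtain ⟨h2, h3⟩ := h2
  set y := x - o with hy
  have e1 : x - (o + d • e) = y - d • e := by rw [hy]; abel
  have e2 : x - (o - d • e') = y + d • e' := by rw [hy]; abel
  rw [e1] at h2
  rw [e2] at h3
  have hy1 : ‖y‖ ^ 2 ≤ 1 := pow_le_one₀ (norm_nonneg _) h1
  have h2' := one_lt_pow₀ h2 two_ne_zero
  have h3' := one_lt_pow₀ h3 two_ne_zero
  rw [norm_sub_sq_real, norm_smul, he, inner_smul_right, norm_of_nonneg hd.le] at h2'
  rw [norm_add_sq_real, norm_smul, he', inner_smul_right, norm_of_nonneg hd.le] at h3'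
  have hsub : inner ℝ y e' - inner ℝ y e ≤ d := by
    rw [← inner_sub_right]
    refine (real_inner_le_norm _ _).trans ?_
    rw [norm_sub_rev e' e]
    nlinarith [norm_nonneg (e - e'), norm_nonneg y]
  have hs1 : inner ℝ y e ≤ d / 2 := by nlinarith
  have hs2 : -(d / 2) ≤ inner ℝ y e' := by nlinarith
  have hr0 : B.repr y 0 = inner ℝ y e := by
    rw [B.repr_apply_apply, hB0, real_inner_comm]
  have hn : ‖y‖ ^ 2 = B.repr y 0 ^ 2 + B.repr y 1 ^ 2 := by
    rw [← B.repr.norm_map y, EuclideanSpace.norm_sq_eq, Fin.sum_univ_two]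
    simp
  have hvec : WithLp.ofLp (B.repr y) = ![B.repr y 0, B.repr y 1] := by
    ext j; fin_cases j <;> rfl
  rw [mem_preimage, hvec]
  refine mem_box_union ?_ (hn ▸ hy1) ?_
  · rw [hr0, abs_le]; constructor <;> linarith
  · rw [← hn]; nlinarith

lemma δ_pow_three {b : ℝ} (hb : 0 ≤ b) : δ b ^ 3 = 1 / (b * log b ^ 3) := by
  have : (b ^ (1 / 3 : ℝ)) ^ 3 = b := by
    rw [← rpow_natCast, ← rpow_mul hb]; norm_num
  rw [δ, div_pow, mul_pow, this, one_pow]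

lemma δ_pos {b : ℝ} (hb : 1 < b) : 0 < δ b := by
  have := log_pos hb
  have : 0 < b := by linarith
  unfold δ
  positivity

lemma θb_le_δ {b : ℝ} (hb : exp 7 ≤ b) : θb b ≤ δ b := by
  have h1 : 1 ≤ b := (one_le_exp (by norm_num)).trans hb
  have hlog : 7 ≤ log b := (le_log_iff_exp_le (by linarith)).2 hb
  have hr := one_le_rpow h1 (by norm_num : (0 : ℝ) ≤ 1 / 3)
  have hL : b ^ (1 / 3 : ℝ) * log b ^ 2 - 1 < L b := Nat.sub_one_lt_floor _
  unfold θb δ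
  set r := b ^ (1 / 3 : ℝ)
  set l := log b
  have hrl : 7 ≤ r * l := by nlinarith
  have hprod : 4 * (r * l) ≤ L b := by nlinarith
  rw [div_le_div_iff₀ (by linarith) (by linarith)]
  nlinarith [pi_le_four]

/-- There is `C > 0` such that for all sufficiently large `b > 1`, every
`o ∈ ℝ₊²` with `D_δ(o) ⊆ ℝ₊²`, every `0 ≤ i < L`, and all `q ∈ Q_i`, `u ∈ R_i`:
`X̂(q,u) ≤ X(q̃_i, ũ_i) ≤ C / (b (log b)³)`. -/
theorem truncated_omitted_area_bound :
    ∃ C > (0 : ℝ), ∃ b₀ : ℝ, 1 < b₀ ∧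
      ∀ b : ℝ, b₀ ≤ b → ∀ o : Plane, o ∈ quad → D o (δ b) ⊆ quad →
        ∀ i : ℕ, i < L b → ∀ q ∈ Qsector o b i, ∀ u ∈ Rsector o b i,
          Xhat o q u ≤ X o (qtil o b i) (util o b i) ∧
          X o (qtil o b i) (util o b i) ≤ C / (b * (Real.log b) ^ 3) := by
  refine ⟨72, by norm_num, exp 7, one_lt_exp_iff.2 (by norm_num), ?_⟩
  rintro b hb o - - i hi q ⟨r, θ, hr, hrδ, hθ1, hθ2, rfl⟩ u ⟨s, φ, hs, hsδ, hφ1, hφ2, rfl⟩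
  have hb1 : 1 < b := (one_lt_exp_iff.2 (by norm_num)).trans_le hb
  have hδ := δ_pos hb1
  have hθδ := θb_le_δ hb
  have hθ0 : 0 ≤ θb b := div_nonneg pi_pos.le (Nat.cast_nonneg _)
  have hθπ : θb b ≤ π := div_le_self pi_pos.le (by exact_mod_cast (Nat.zero_le i).trans_lt hi)
  constructor
  · calc Xhat o (polarPt o r θ) (polarPt o s φ)
        ≤ X o (polarPt o r θ) (polarPt o s φ) :=
          ENNReal.toReal_mono (volume_D_diff_ne_top _ _)
            (measure_mono (sdiff_subset_sdiff_left inter_subset_left))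
      _ ≤ X o (polarPt o (δ b) θ) (polarPt o (δ b) φ) := X_polarPt_mono hr hrδ hs hsδ
      _ ≤ X o (qtil o b i) (util o b i) :=
          X_le_X_of_dist_le (dist_polarPt_self o hδ.le _) (dist_polarPt_self o hδ.le _)
            (dist_polarPt_self o hδ.le _) (dist_polarPt_self o hδ.le _)
            (dist_polarPt_extreme_le o (by linarith) hθ1 hθ2 hφ1 hφ2)
  · have hu : util o b i = o - δ b • pt (cos (((i : ℝ) + 1/2) * θb b))
        (sin (((i : ℝ) + 1/2) * θb b)) := by
      ext j
      fin_cases j <;> simp [util, polarPt, pt, cos_add_pi, sin_add_pi, sub_eq_add_neg]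
    rw [hu, ← mul_one_div (72 : ℝ), ← δ_pow_three (zero_le_one.trans hb1.le)]
    refine X_le_of_nearly_antipodal hδ (norm_pt_cos_sin _) (norm_pt_cos_sin _)
      (le_trans ?_ hθδ)
    refine (sq_le_sq₀ (norm_nonneg _) hθ0).1 ?_
    rw [norm_pt_cos_sin_sub_sq]
    have h := one_sub_sq_div_two_le_cos (x := ((i : ℝ) - 1/2) * θb b - ((i : ℝ) + 1/2) * θb b)
    nlinarith
end
end

section
/- There exist a constant C > 0 and b₀ such that for all integers b ≥ b₀ and all points o ∈ ℝ₊² with D_δ(o) ⊆ ℝ₊², the expected value of τ_b satisfies |E(τ_b) − b^{1/3}·λ̂(o)²/(4·(log b)⁶)| ≤ C·b^{1/3}/(log b)^{10}. -/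
open MeasureTheory Real Set
open scoped ENNReal

noncomputable section

/-- `λ̂(o) = π / |D̂₁(o)|`. -/
def lamHat (o : Plane) : ℝ := Real.pi / (volume (Dhat o)).toReal

/-- The uniform probability measure on a set `S` (normalized restricted Lebesgue measure). -/
def unif (S : Set Plane) : Measure Plane := (volume S)⁻¹ • volume.restrict S

/-- The joint law of `b` points chosen independently and uniformly at random from `D̂₁(o)`. -/
def ptsMeasure (o : Plane) (b : ℕ) : Measure (Fin b → Plane) :=
  Measure.pi fun _ => unif (Dhat o)

/-- The number of the points `ω 0, …, ω (b-1)` that lie in the set `S`. -/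
def countIn {b : ℕ} (S : Set Plane) (ω : Fin b → Plane) : ℕ :=
  Set.ncard {j : Fin b | ω j ∈ S}

open scoped Classical in
/-- `τ_b = Σ_{i=0}^{L-1} 1[N(Q_i) = 1 ∧ N(R_i) = 1]`. -/
def tau (o : Plane) (b : ℕ) (ω : Fin b → Plane) : ℕ :=
  ∑ i ∈ Finset.range (L b),
    if countIn (Qsector o b i) ω = 1 ∧ countIn (Rsector o b i) ω = 1 then 1 else 0

/-- The circular sector with apex `o`, radius `ρ`, central direction `φ` and half-angle `η`. -/
def sector (o : Plane) (ρ φ η : ℝ) : Set Plane :=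
  {p | ∃ r θ : ℝ, 0 < r ∧ r ≤ ρ ∧ φ - η ≤ θ ∧ θ ≤ φ + η ∧ p = polarPt o r θ}

lemma Qsector_eq_sector (o : Plane) (b : ℝ) (i : ℕ) :
    Qsector o b i = sector o (δ b) (i * θb b) (θb b / 2) := by
  ext p
  simp only [Qsector, sector, mem_ofPred_eq]
  have h₁ : ((i : ℝ) - 1/2) * θb b = i * θb b - θb b / 2 := by ring
  have h₂ : ((i : ℝ) + 1/2) * θb b = i * θb b + θb b / 2 := by ring
  rw [h₁, h₂]

lemma Rsector_eq_sector (o : Plane) (b : ℝ) (i : ℕ) :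
    Rsector o b i = sector o (δ b) (i * θb b + π) (θb b / 2) := by
  ext p
  simp only [Rsector, sector, mem_ofPred_eq]
  refine exists_congr fun r => exists_congr fun θ => and_congr_right fun _ =>
    and_congr_right fun _ => ?_
  have h₁ : ((i : ℝ) - 1/2) * θb b ≤ θ - π ↔ i * θb b + π - θb b / 2 ≤ θ := by
    constructor <;> intro h <;> linarith
  have h₂ : θ - π ≤ ((i : ℝ) + 1/2) * θb b ↔ θ ≤ i * θb b + π + θb b / 2 := by
    constructor <;> intro h <;> linarith
  rw [h₁, h₂]

lemma polarPt_zero (o : Plane) (r θ : ℝ) : polarPt o r θ 0 = o 0 + r * cos θ := by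
  simp [polarPt, pt]

lemma polarPt_one (o : Plane) (r θ : ℝ) : polarPt o r θ 1 = o 1 + r * sin θ := by
  simp [polarPt, pt]

lemma sector_subset_closedBall (o : Plane) (ρ φ η : ℝ) :
    sector o ρ φ η ⊆ Metric.closedBall o ρ := by
  rintro p ⟨r, θ, hr, hrρ, -, -, rfl⟩
  have h : ‖pt (cos θ) (sin θ)‖ = 1 := by
    simp [EuclideanSpace.norm_eq, pt]
  simp [polarPt, norm_smul, h, abs_of_pos hr, hrρ]

/-- Opposite sectors of half-angle less than `π / 2` do not meet. -/
lemma disjoint_sector_add_pi (o : Plane) (ρ φ : ℝ) {η : ℝ} (hη : η < π / 2) :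
    Disjoint (sector o ρ φ η) (sector o ρ (φ + π) η) := by
  rw [Set.disjoint_left]
  rintro p ⟨r, θ, hr, -, h₁, h₂, rfl⟩ ⟨s, ψ, hs, -, h₃, h₄, h⟩
  have hx : r * cos θ = s * cos ψ := by
    have := congrArg (fun p : Plane => p 0) h
    simpa [polarPt_zero] using this
  have hy : r * sin θ = s * sin ψ := by
    have := congrArg (fun p : Plane => p 1) h
    simpa [polarPt_one] using this
  have hc : r * cos (θ - φ) = s * cos (ψ - φ) := by
    rw [cos_sub, cos_sub]
    linear_combination cos φ * hx + sin φ * hy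
  have hpos : 0 < cos (θ - φ) := cos_pos_of_mem_Ioo ⟨by linarith, by linarith⟩
  have hneg : cos (ψ - φ) < 0 :=
    cos_neg_of_pi_div_two_lt_of_lt (by linarith) (by linarith)
  have h₅ := mul_pos hr hpos
  have h₆ := mul_neg_of_pos_of_neg hs hneg
  linarith

/-- The sector of `ℂ` around the positive real axis. -/
def stdSector (ρ η : ℝ) : Set ℂ := {z | z ≠ 0 ∧ ‖z‖ ≤ ρ ∧ |z.arg| ≤ η}

lemma measurableSet_stdSector (ρ η : ℝ) : MeasurableSet (stdSector ρ η) := by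
  have h₁ : MeasurableSet {z : ℂ | z ≠ 0} := (measurableSet_singleton 0).compl
  have h₂ : MeasurableSet {z : ℂ | ‖z‖ ≤ ρ} := measurableSet_le measurable_norm measurable_const
  have h₃ : MeasurableSet {z : ℂ | |z.arg| ≤ η} :=
    measurableSet_le (Complex.measurable_arg.abs) measurable_const
  exact h₁.inter (h₂.inter h₃)

lemma mul_exp_mem_stdSector {r θ ρ η : ℝ} (hr : 0 < r) (hrρ : r ≤ ρ) (hθ : |θ| ≤ η)
    (hη : η < π) : (r : ℂ) * Complex.exp (θ * Complex.I) ∈ stdSector ρ η := by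
  have h := abs_le.1 hθ
  have harg : Complex.arg (r * Complex.exp (θ * Complex.I)) = θ := by
    rw [Complex.exp_mul_I]
    exact Complex.arg_mul_cos_add_sin_mul_I hr ⟨by linarith, by linarith⟩
  refine ⟨by simp [hr.ne'], ?_, by rwa [harg]⟩
  simpa [Complex.norm_exp_ofReal_mul_I, abs_of_pos hr] using hrρ

lemma volume_stdSector {ρ η : ℝ} (hρ : 0 ≤ ρ) (hη : η < π) :
    volume (stdSector ρ η) = ENNReal.ofReal (ρ ^ 2 * η) := by
  have hS : MeasurableSet (Ioc 0 ρ ×ˢ Icc (-η) η : Set (ℝ × ℝ)) :=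
    measurableSet_Ioc.prod measurableSet_Icc
  have hsub : (Ioc 0 ρ ×ˢ Icc (-η) η : Set (ℝ × ℝ)) ⊆ polarCoord.target := by
    rintro ⟨r, θ⟩ ⟨⟨h₁, -⟩, h₂, h₃⟩
    simp only at h₁ h₂ h₃
    exact ⟨h₁, by simp only; linarith, by simp only; linarith⟩
  have hmem : ∀ p ∈ polarCoord.target, Complex.polarCoord.symm p ∈ stdSector ρ η ↔
      p ∈ (Ioc 0 ρ ×ˢ Icc (-η) η : Set (ℝ × ℝ)) := by
    rintro ⟨r, θ⟩ ⟨h₁, h₂, h₃⟩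
    simp only [mem_Ioi] at h₁ h₂ h₃
    have harg : Complex.arg (Complex.polarCoord.symm (r, θ)) = θ := by
      rw [Complex.polarCoord_symm_apply]
      simpa using Complex.arg_mul_cos_add_sin_mul_I h₁ ⟨h₂, h₃.le⟩
    have hnorm : ‖Complex.polarCoord.symm (r, θ)‖ = r := by
      rw [Complex.norm_polarCoord_symm, abs_of_pos h₁]
    have hne : Complex.polarCoord.symm (r, θ) ≠ 0 := by
      rw [← norm_pos_iff, hnorm]; exact h₁
    simp only [stdSector, mem_ofPred_eq, harg, hnorm, mem_prod, mem_Ioc, mem_Icc, abs_le]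
    exact ⟨fun h => ⟨⟨h₁, h.2.1⟩, h.2.2⟩, fun h => ⟨hne, h.1.2, h.2⟩⟩
  have hrad : ∫⁻ r in Ioc 0 ρ, ENNReal.ofReal r = ENNReal.ofReal (ρ ^ 2 / 2) := by
    rw [← ofReal_integral_eq_lintegral_ofReal]
    · rw [← intervalIntegral.integral_of_le hρ, integral_id]
      simp
    · exact continuous_id.integrableOn_Ioc
    · exact (ae_restrict_mem measurableSet_Ioc).mono fun r hr => hr.1.le
  calc volume (stdSector ρ η)
      = ∫⁻ z, (stdSector ρ η).indicator 1 z :=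
        (lintegral_indicator_one (measurableSet_stdSector ρ η)).symm
    _ = ∫⁻ p in polarCoord.target, ENNReal.ofReal p.1 •
          (stdSector ρ η).indicator 1 (Complex.polarCoord.symm p) :=
        (Complex.lintegral_comp_polarCoord_symm _).symm
    _ = ∫⁻ p in polarCoord.target,
          (Ioc 0 ρ ×ˢ Icc (-η) η : Set (ℝ × ℝ)).indicator (fun p => ENNReal.ofReal p.1) p := by
        refine setLIntegral_congr_fun polarCoord.open_target.measurableSet fun p hp => ?_
        by_cases h : p ∈ (Ioc 0 ρ ×ˢ Icc (-η) η : Set (ℝ × ℝ))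
        · simp only [indicator_of_mem h, indicator_of_mem ((hmem p hp).2 h)]
          simp
        · simp only [indicator_of_notMem h, indicator_of_notMem (mt (hmem p hp).1 h)]
          simp
    _ = ∫⁻ p in Ioc 0 ρ ×ˢ Icc (-η) η, ENNReal.ofReal p.1 := by
        rw [lintegral_indicator hS, Measure.restrict_restrict hS, inter_eq_left.2 hsub]
    _ = (∫⁻ r in Ioc 0 ρ, ENNReal.ofReal r) * ∫⁻ _ in Icc (-η) η, 1 := by
        rw [Measure.volume_eq_prod, ← Measure.prod_restrict, ← lintegral_prod_mul
          (by fun_prop) (by fun_prop)]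
        simp
    _ = ENNReal.ofReal (ρ ^ 2 * η) := by
        rw [hrad, setLIntegral_one, Real.volume_Icc, ← ENNReal.ofReal_mul (by positivity)]
        congr 1
        ring

/-- The linear isometry from the plane to `ℂ` turning the direction `φ` into the positive real
axis. -/
def turn (φ : ℝ) : Plane ≃ₗᵢ[ℝ] ℂ :=
  Complex.orthonormalBasisOneI.repr.symm.trans (rotation (Circle.exp (-φ)))

lemma turn_polarPt (o : Plane) (r θ φ : ℝ) :
    turn φ (-o + polarPt o r θ) = r * Complex.exp ((θ - φ : ℝ) * Complex.I) := by
  have h : -o + polarPt o r θ = r • pt (cos θ) (sin θ) := by simp [polarPt]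
  have h' : Complex.orthonormalBasisOneI.repr.symm (pt (cos θ) (sin θ)) =
      Complex.exp (θ * Complex.I) := by
    rw [Complex.orthonormalBasisOneI_repr_symm_apply, Complex.exp_mul_I]
    simp [pt]
  rw [h, map_smul, turn, LinearIsometryEquiv.trans_apply, h', rotation_apply, Circle.coe_exp,
    ← Complex.exp_add, Complex.real_smul]
  push_cast
  ring_nf

lemma sector_eq_preimage (o : Plane) (ρ φ : ℝ) {η : ℝ} (hη : η < π) :
    sector o ρ φ η = (fun p => turn φ (-o + p)) ⁻¹' stdSector ρ η := by
  ext p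
  constructor
  · rintro ⟨r, θ, hr, hrρ, h₁, h₂, rfl⟩
    rw [mem_preimage, turn_polarPt]
    exact mul_exp_mem_stdSector hr hrρ (abs_le.2 ⟨by linarith, by linarith⟩) hη
  · rintro ⟨h₀, hρ, harg⟩
    have h := abs_le.1 harg
    refine ⟨‖turn φ (-o + p)‖, φ + (turn φ (-o + p)).arg, norm_pos_iff.2 h₀, hρ,
      by linarith, by linarith, ?_⟩
    apply add_left_cancel (a := -o)
    apply (turn φ).injective
    rw [turn_polarPt, add_sub_cancel_left, Complex.norm_mul_exp_arg_mul_I]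

lemma measurePreserving_turn (o : Plane) (φ : ℝ) :
    MeasurePreserving (fun p => turn φ (-o + p)) :=
  (turn φ).measurePreserving.comp (measurePreserving_add_left volume (-o))

lemma measurableSet_sector (o : Plane) (ρ φ : ℝ) {η : ℝ} (hη : η < π) :
    MeasurableSet (sector o ρ φ η) := by
  rw [sector_eq_preimage o ρ φ hη]
  exact (measurePreserving_turn o φ).measurable (measurableSet_stdSector ρ η)

lemma volume_sector (o : Plane) (φ : ℝ) {ρ η : ℝ} (hρ : 0 ≤ ρ) (hη : η < π) :
    volume (sector o ρ φ η) = ENNReal.ofReal (ρ ^ 2 * η) := by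
  rw [sector_eq_preimage o ρ φ hη, (measurePreserving_turn o φ).measure_preimage
    (measurableSet_stdSector ρ η).nullMeasurableSet, volume_stdSector hρ hη]

section OnePointEach

variable {n : ℕ}

/-- The configurations whose `x.1`-th point is the only one in `A` and whose `x.2`-th point is the
only one in `B`, for disjoint `A`, `B` and `x.1 ≠ x.2`. -/
def onlyAt (A B : Set Plane) (x : Fin n × Fin n) : Set (Fin n → Plane) :=
  Set.univ.pi fun l => if l = x.1 then A else if l = x.2 then B else (A ∪ B)ᶜ

lemma mem_onlyAt {A B : Set Plane} (hAB : Disjoint A B) {x : Fin n × Fin n} (hx : x.1 ≠ x.2)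
    {ω : Fin n → Plane} :
    ω ∈ onlyAt A B x ↔ {j | ω j ∈ A} = {x.1} ∧ {j | ω j ∈ B} = {x.2} := by
  have hd : ∀ p, p ∈ A → p ∉ B := fun p h => Set.disjoint_left.1 hAB h
  simp only [onlyAt, mem_univ_pi, Set.ext_iff, mem_ofPred_eq, mem_singleton_iff]
  constructor
  · intro h
    refine ⟨fun l => ⟨fun hl => ?_, fun hl => ?_⟩, fun l => ⟨fun hl => ?_, fun hl => ?_⟩⟩
    all_goals
      have := h l
      have := hd (ω l)
      split_ifs at * <;> simp_all
  · rintro ⟨h₁, h₂⟩ l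
    have h₁ := h₁ l
    have h₂ := h₂ l
    split_ifs with h₃ h₄
    · exact h₁.2 h₃
    · exact h₂.2 h₄
    · rintro (h | h)
      exacts [h₃ (h₁.1 h), h₄ (h₂.1 h)]

lemma countIn_eq_one_and_eq_one_iff {A B : Set Plane} (hAB : Disjoint A B) {ω : Fin n → Plane} :
    (countIn A ω = 1 ∧ countIn B ω = 1) ↔
      ω ∈ ⋃ x ∈ (Finset.univ : Finset (Fin n)).offDiag, onlyAt A B x := by
  simp only [countIn, ncard_eq_one, mem_iUnion, Finset.mem_offDiag, Finset.mem_univ, true_and,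
    exists_prop]
  constructor
  · rintro ⟨⟨j, hj⟩, k, hk⟩
    have hne : j ≠ k := by
      rintro rfl
      have h₁ : j ∈ {j | ω j ∈ A} := hj ▸ mem_singleton j
      have h₂ : j ∈ {j | ω j ∈ B} := hk ▸ mem_singleton j
      exact Set.disjoint_left.1 hAB h₁ h₂
    exact ⟨(j, k), hne, (mem_onlyAt hAB hne).2 ⟨hj, hk⟩⟩
  · rintro ⟨x, hne, hx⟩
    obtain ⟨h₁, h₂⟩ := (mem_onlyAt hAB hne).1 hx
    exact ⟨⟨_, h₁⟩, _, h₂⟩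

lemma measurableSet_onlyAt {A B : Set Plane} (hA : MeasurableSet A) (hB : MeasurableSet B)
    (x : Fin n × Fin n) : MeasurableSet (onlyAt A B x) := by
  refine MeasurableSet.univ_pi fun l => ?_
  split_ifs
  exacts [hA, hB, (hA.union hB).compl]

lemma measureReal_onlyAt (μ : Measure Plane) [IsProbabilityMeasure μ] {A B : Set Plane}
    (hA : MeasurableSet A) (hB : MeasurableSet B) (hAB : Disjoint A B)
    {x : Fin n × Fin n} (hx : x.1 ≠ x.2) :
    (Measure.pi fun _ : Fin n => μ).real (onlyAt A B x) =
      μ.real A * μ.real B * (1 - (μ.real A + μ.real B)) ^ (n - 2) := by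
  have hc : μ.real (A ∪ B)ᶜ = 1 - (μ.real A + μ.real B) := by
    rw [probReal_compl_eq_one_sub (hA.union hB), measureReal_union hAB hB]
  have hmem : x.2 ∈ (Finset.univ : Finset (Fin n)).erase x.1 :=
    Finset.mem_erase.2 ⟨hx.symm, Finset.mem_univ _⟩
  rw [measureReal_def, onlyAt, Measure.pi_pi, ENNReal.toReal_prod,
    ← Finset.mul_prod_erase _ _ (Finset.mem_univ x.1), ← Finset.mul_prod_erase _ _ hmem]
  rw [Finset.prod_eq_pow_card (b := μ.real (A ∪ B)ᶜ)]
  · have hcard : ((Finset.univ.erase x.1).erase x.2).card = n - 2 := by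
      rw [Finset.card_erase_of_mem hmem, Finset.card_erase_of_mem (Finset.mem_univ _)]
      simp; omega
    rw [hcard, hc]
    simp [hx.symm, measureReal_def, mul_assoc]
  · intro l hl
    simp only [Finset.mem_erase, Finset.mem_univ, and_true] at hl
    simp [hl.1, hl.2, measureReal_def]

/-- The probability that exactly one of `n` independent points with law `μ` falls in each of two
disjoint sets. -/
lemma measureReal_countIn_eq_one_and_eq_one (μ : Measure Plane) [IsProbabilityMeasure μ]
    {A B : Set Plane} (hA : MeasurableSet A) (hB : MeasurableSet B) (hAB : Disjoint A B) :
    MeasurableSet {ω : Fin n → Plane | countIn A ω = 1 ∧ countIn B ω = 1} ∧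
    (Measure.pi fun _ : Fin n => μ).real {ω | countIn A ω = 1 ∧ countIn B ω = 1} =
      (n * n - n : ℝ) * (μ.real A * μ.real B * (1 - (μ.real A + μ.real B)) ^ (n - 2)) := by
  have hset : {ω : Fin n → Plane | countIn A ω = 1 ∧ countIn B ω = 1} =
      ⋃ x ∈ (Finset.univ : Finset (Fin n)).offDiag, onlyAt A B x := by
    ext ω
    exact countIn_eq_one_and_eq_one_iff hAB
  have hm : ∀ x ∈ (Finset.univ : Finset (Fin n)).offDiag, MeasurableSet (onlyAt A B x) :=
    fun x _ => measurableSet_onlyAt hA hB x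
  rw [hset]
  refine ⟨Finset.measurableSet_biUnion _ hm, ?_⟩
  rw [measureReal_biUnion_finset _ hm]
  · rw [Finset.sum_congr rfl fun x hx =>
      measureReal_onlyAt μ hA hB hAB (Finset.mem_offDiag.1 hx).2.2]
    rw [Finset.sum_const, Finset.offDiag_card, nsmul_eq_mul, Finset.card_univ, Fintype.card_fin,
      Nat.cast_sub (Nat.le_mul_self n)]
    push_cast
    rfl
  · intro x hx y hy hxy
    refine Set.disjoint_left.2 fun ω h₁ h₂ => hxy ?_
    obtain ⟨hx₁, hx₂⟩ := (mem_onlyAt hAB (Finset.mem_offDiag.1 hx).2.2).1 h₁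
    obtain ⟨hy₁, hy₂⟩ := (mem_onlyAt hAB (Finset.mem_offDiag.1 hy).2.2).1 h₂
    exact Prod.ext (singleton_injective (hx₁.symm.trans hy₁))
      (singleton_injective (hx₂.symm.trans hy₂))

end OnePointEach

lemma isClosed_Dhat (o : Plane) : IsClosed (Dhat o) := by
  have h₀ : IsClosed {p : Plane | 0 ≤ p 0} := isClosed_le continuous_const (by fun_prop)
  have h₁ : IsClosed {p : Plane | 0 ≤ p 1} := isClosed_le continuous_const (by fun_prop)
  exact Metric.isClosed_closedBall.inter (h₀.inter h₁)

lemma volume_Dhat_ne_top (o : Plane) : volume (Dhat o) ≠ ∞ :=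
  measure_ne_top_of_subset inter_subset_left measure_closedBall_lt_top.ne

/-- The truncated disk of a point of the quadrant contains a disk of radius `1/4`. -/
lemma pi_div_le_volume_Dhat {o : Plane} (ho : o ∈ quad) : π / 16 ≤ (volume (Dhat o)).toReal := by
  have hsub : Metric.closedBall (o + pt (1/2) (1/2)) (1/4) ⊆ Dhat o := by
    intro p hp
    rw [Metric.mem_closedBall, EuclideanSpace.dist_eq, Real.sqrt_le_left (by norm_num)] at hp
    simp only [Fin.sum_univ_two, Real.dist_eq, sq_abs, pt, PiLp.add_apply] at hp
    simp only [WithLp.equiv_symm_apply, Matrix.cons_val_zero, Matrix.cons_val_one] at hp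
    have h₀ := abs_le.1 (abs_le_of_sq_le_sq (a := p 0 - (o 0 + 1/2)) (b := 1/4)
      (by nlinarith [sq_nonneg (p 1 - (o 1 + 1/2))]) (by norm_num))
    have h₁ := abs_le.1 (abs_le_of_sq_le_sq (a := p 1 - (o 1 + 1/2)) (b := 1/4)
      (by nlinarith [sq_nonneg (p 0 - (o 0 + 1/2))]) (by norm_num))
    refine ⟨?_, by have := ho.1; linarith, by have := ho.2; linarith⟩
    rw [D, Metric.mem_closedBall, EuclideanSpace.dist_eq, Real.sqrt_le_left (by norm_num)]
    simp only [Fin.sum_univ_two, Real.dist_eq, sq_abs]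
    nlinarith
  have h := ENNReal.toReal_mono (volume_Dhat_ne_top o) (measure_mono hsub)
  rw [EuclideanSpace.volume_closedBall_fin_two] at h
  simp only [ENNReal.toReal_mul, ENNReal.toReal_pow, ENNReal.toReal_ofReal pi_pos.le,
    ENNReal.toReal_ofReal (by norm_num : (0 : ℝ) ≤ 1/4)] at h
  linarith

lemma volume_Dhat_pos {o : Plane} (ho : o ∈ quad) : 0 < (volume (Dhat o)).toReal :=
  lt_of_lt_of_le (by positivity) (pi_div_le_volume_Dhat ho)

lemma lamHat_pos {o : Plane} (ho : o ∈ quad) : 0 < lamHat o :=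
  div_pos pi_pos (volume_Dhat_pos ho)

lemma lamHat_le {o : Plane} (ho : o ∈ quad) : lamHat o ≤ 16 := by
  rw [lamHat, div_le_iff₀ (volume_Dhat_pos ho)]
  linarith [pi_div_le_volume_Dhat ho]

lemma isProbabilityMeasure_unif_Dhat {o : Plane} (ho : o ∈ quad) :
    IsProbabilityMeasure (unif (Dhat o)) := by
  refine ⟨?_⟩
  have h := (ENNReal.toReal_pos_iff.1 (volume_Dhat_pos ho)).1.ne'
  simp [unif, ENNReal.inv_mul_cancel h (volume_Dhat_ne_top o)]

lemma unif_real_sector {o : Plane} {ρ η : ℝ} (φ : ℝ) (hρ : 0 ≤ ρ)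
    (hη₀ : 0 ≤ η) (hη : η < π) (hsub : D o ρ ⊆ Dhat o) :
    (unif (Dhat o)).real (sector o ρ φ η) = ρ ^ 2 * η / (volume (Dhat o)).toReal := by
  rw [measureReal_def, unif, Measure.smul_apply, Measure.restrict_apply
    (measurableSet_sector o ρ φ hη), inter_eq_left.2
    ((sector_subset_closedBall o ρ φ η).trans hsub), volume_sector o φ hρ hη, smul_eq_mul,
    ENNReal.toReal_mul, ENNReal.toReal_inv, ENNReal.toReal_ofReal (by positivity)]
  ring

/-- Exact value of the expectation of `τ_b`. -/
lemma integral_tau {o : Plane} (ho : o ∈ quad) {b : ℕ} (hδ : 0 ≤ δ b) (hδ₁ : δ b ≤ 1)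
    (hL : 2 ≤ L b) (hsub : D o (δ b) ⊆ quad) {p : ℝ} (hp : p = lamHat o * δ b ^ 2 / (2 * L b)) :
    2 * p ≤ 1 ∧ ∫ ω, (tau o b ω : ℝ) ∂(ptsMeasure o b) =
      L b * ((b * b - b : ℝ) * (p * p * (1 - (p + p)) ^ (b - 2))) := by
  classical
  have := isProbabilityMeasure_unif_Dhat ho
  have hLpos : (0 : ℝ) < L b := by exact_mod_cast (by omega : 0 < L b)
  have hL2 : (2 : ℝ) ≤ L b := by exact_mod_cast hL
  have hθ₀ : 0 ≤ θb b / 2 := by unfold θb; positivity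
  have hθ : θb b / 2 < π / 2 := by
    have : θb b < π := by
      rw [θb, div_lt_iff₀ hLpos]
      nlinarith [pi_pos]
    linarith
  have hθ' : θb b / 2 < π := by linarith [pi_pos]
  have hD : D o (δ b) ⊆ Dhat o :=
    subset_inter (Metric.closedBall_subset_closedBall hδ₁) hsub
  have hreal : ∀ φ, (unif (Dhat o)).real (sector o (δ b) φ (θb b / 2)) = p := by
    intro φ
    rw [unif_real_sector φ hδ hθ₀ hθ' hD, hp, lamHat, θb]
    have := (volume_Dhat_pos ho).ne'
    field_simp
  have hdisj : ∀ φ, Disjoint (sector o (δ b) φ (θb b / 2)) (sector o (δ b) (φ + π) (θb b / 2)) :=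
    fun φ => disjoint_sector_add_pi o (δ b) φ hθ
  have hmeas : ∀ φ, MeasurableSet (sector o (δ b) φ (θb b / 2)) :=
    fun φ => measurableSet_sector o (δ b) φ hθ'
  refine ⟨?_, ?_⟩
  · have h := measureReal_union (μ := unif (Dhat o)) (hdisj 0) (hmeas _)
    rw [hreal, hreal] at h
    linarith [measureReal_le_one (μ := unif (Dhat o))
      (s := sector o (δ b) 0 (θb b / 2) ∪ sector o (δ b) (0 + π) (θb b / 2))]
  · have hev : ∀ i : ℕ, MeasurableSet {ω : Fin b → Plane |
          countIn (Qsector o b i) ω = 1 ∧ countIn (Rsector o b i) ω = 1} ∧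
        (ptsMeasure o b).real {ω : Fin b → Plane |
          countIn (Qsector o b i) ω = 1 ∧ countIn (Rsector o b i) ω = 1} =
        (b * b - b : ℝ) * (p * p * (1 - (p + p)) ^ (b - 2)) := by
      intro i
      have h := measureReal_countIn_eq_one_and_eq_one (n := b) (unif (Dhat o))
        (hmeas (i * θb b)) (hmeas (i * θb b + π)) (hdisj _)
      rw [hreal, hreal] at h
      rw [Qsector_eq_sector, Rsector_eq_sector]
      exact h
    have : IsProbabilityMeasure (ptsMeasure o b) := by unfold ptsMeasure; infer_instance
    have htau : ∀ ω, (tau o b ω : ℝ) = ∑ i ∈ Finset.range (L b), {ω : Fin b → Plane |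
        countIn (Qsector o b i) ω = 1 ∧ countIn (Rsector o b i) ω = 1}.indicator 1 ω := by
      intro ω
      simp [tau, indicator_apply]
    simp_rw [htau]
    rw [integral_finsetSum]
    · rw [Finset.sum_congr rfl fun i _ => (integral_indicator_one (hev i).1).trans (hev i).2,
        Finset.sum_const, Finset.card_range, nsmul_eq_mul]
    · exact fun i _ => (integrable_const 1).indicator (hev i).1

lemma expectation_estimate {B l lam p : ℝ} {b n : ℕ} (hb : (b : ℝ) = B ^ 3) (hl : 2 ≤ l)
    (hBl : l ^ 2 ≤ B) (hn : (n : ℝ) ≤ B * l ^ 2) (hn' : B * l ^ 2 < n + 1)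
    (hlam : 0 < lam) (hlam' : lam ≤ 16) (hp : p = lam * (1 / (B * l)) ^ 2 / (2 * n))
    (hp₁ : 2 * p ≤ 1) :
    |n * ((b * b - b : ℝ) * (p * p * (1 - (p + p)) ^ (b - 2))) - B * lam ^ 2 / (4 * l ^ 6)| ≤
      2112 * B / l ^ 10 := by
  have hl₀ : 0 < l := by linarith
  have hl4 : 4 ≤ l ^ 2 := by nlinarith
  have hB : 4 ≤ B := hl4.trans hBl
  have hB₀ : 0 < B := by linarith
  have hx : l ^ 4 ≤ B * l ^ 2 := by nlinarith
  have hx16 : 16 ≤ B * l ^ 2 := by nlinarith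
  have hnx : B * l ^ 2 / 2 ≤ n := by linarith
  have hn₀ : (0 : ℝ) < n := by linarith
  have hp₀ : 0 < p := by rw [hp]; positivity
  set ε : ℝ := 1 / l ^ 4 with hε
  have hε₀ : 0 < ε := by positivity
  have hB3 : l ^ 4 ≤ B ^ 3 := by nlinarith [mul_le_mul hBl hBl (by positivity) hB₀.le]
  set u : ℝ := 1 - 1 / B ^ 3 with hu
  set v : ℝ := B * l ^ 2 / n with hv
  set w : ℝ := (1 - (p + p)) ^ (b - 2) with hw
  have hu₁ : u ≤ 1 := by
    have : 0 < 1 / B ^ 3 := by positivity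
    linarith
  have hu₂ : 1 - ε ≤ u := by
    have := one_div_le_one_div_of_le (by positivity) hB3
    linarith
  have hu₀ : 0 ≤ u := by
    have : ε ≤ 1 := by
      rw [hε, div_le_one (by positivity)]
      nlinarith
    linarith
  have hv₁ : 1 ≤ v := by rw [hv, one_le_div hn₀]; exact hn
  have hv₂ : v ≤ 1 + 2 * ε := by
    rw [hv, div_le_iff₀ hn₀]
    have h : 1 ≤ 2 * ε * n := by
      rw [hε, mul_one_div, div_mul_eq_mul_div, le_div_iff₀ (by positivity)]
      linarith
    linarith
  have hw₀ : 0 ≤ w := pow_nonneg (by linarith) _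
  have hw₁ : w ≤ 1 := pow_le_one₀ (by linarith) (by linarith)
  have hw₂ : 1 - 32 * ε ≤ w := by
    have h := one_add_mul_le_pow (a := -(p + p)) (by linarith) (b - 2)
    rw [← sub_eq_add_neg 1 (p + p)] at h
    have hb2 : ((b - 2 : ℕ) : ℝ) ≤ b := by exact_mod_cast Nat.sub_le b 2
    have hbp : (b : ℝ) * (p + p) ≤ 32 * ε := by
      have : (b : ℝ) * (p + p) = B * lam / (l ^ 2 * n) := by
        rw [hb, hp]; field_simp; ring
      rw [this, hε, mul_one_div, div_le_div_iff₀ (by positivity) (by positivity)]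
      calc B * lam * l ^ 4 ≤ B * 16 * l ^ 4 := by gcongr
        _ = 32 * (l ^ 2 * (B * l ^ 2 / 2)) := by ring
        _ ≤ 32 * (l ^ 2 * n) := by gcongr
    have := mul_le_mul_of_nonneg_right hb2 (by linarith : 0 ≤ p + p)
    linarith
  have hratio : |u * v * w - 1| ≤ 33 * ε := by
    rw [abs_le]
    constructor
    · have h₁ : u * w ≤ u * v * w := by
        have := mul_le_mul_of_nonneg_left hv₁ (mul_nonneg hu₀ hw₀)
        linarith
      have h₂ : 0 ≤ (1 - u) * (1 - w) := mul_nonneg (by linarith) (by linarith)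
      linarith
    · have h₁ : u * v * w ≤ v := by
        calc u * v * w ≤ 1 * v * 1 := by gcongr
          _ = v := by ring
      linarith
  have hmain : n * ((b * b - b : ℝ) * (p * p * w)) - B * lam ^ 2 / (4 * l ^ 6) =
      B * lam ^ 2 / (4 * l ^ 6) * (u * v * w - 1) := by
    rw [hb, hp, hu, hv]
    field_simp
    ring
  rw [hmain, abs_mul, abs_of_nonneg (by positivity)]
  calc B * lam ^ 2 / (4 * l ^ 6) * |u * v * w - 1|
      ≤ B * 16 ^ 2 / (4 * l ^ 6) * (33 * ε) := by gcongr
    _ = 2112 * B / l ^ 10 := by rw [hε]; field_simp; ring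

lemma eventually_log_bounds :
    ∀ᶠ b : ℕ in Filter.atTop, 2 ≤ log b ∧ log b ^ 2 ≤ (b : ℝ) ^ (1/3 : ℝ) := by
  have h₁ : ∀ᶠ x : ℝ in Filter.atTop, 2 ≤ log x := tendsto_log_atTop.eventually_ge_atTop 2
  have h₂ := (isLittleO_log_rpow_rpow_atTop (s := 1/3) 2 (by norm_num)).bound one_pos
  filter_upwards [tendsto_natCast_atTop_atTop.eventually (h₁.and h₂)] with b hb
  refine ⟨hb.1, ?_⟩
  have h := hb.2
  rwa [rpow_two, one_mul, norm_of_nonneg (by positivity), norm_of_nonneg (by positivity)] at h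

/-- There are `C > 0` and `b₀` such that for all integers `b ≥ b₀` and all
`o ∈ ℝ₊²` with `D_δ(o) ⊆ ℝ₊²`:
`|E(τ_b) − b^{1/3} λ̂(o)² / (4 (log b)⁶)| ≤ C b^{1/3} / (log b)^{10}`. -/
theorem expectation_tau :
    ∃ C > (0 : ℝ), ∃ b₀ : ℕ, ∀ b : ℕ, b₀ ≤ b → ∀ o : Plane, o ∈ quad → D o (δ b) ⊆ quad →
      |(∫ ω, (tau o b ω : ℝ) ∂(ptsMeasure o b)) -
          (b : ℝ) ^ (1/3 : ℝ) * lamHat o ^ 2 / (4 * (Real.log b) ^ 6)| ≤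
        C * (b : ℝ) ^ (1/3 : ℝ) / (Real.log b) ^ 10 := by
  obtain ⟨b₀, hb₀⟩ := Filter.eventually_atTop.1 eventually_log_bounds
  refine ⟨2112, by norm_num, b₀, fun b hb o ho hsub => ?_⟩
  obtain ⟨hl, hBl⟩ := hb₀ b hb
  have hB : 1 ≤ (b : ℝ) ^ (1/3 : ℝ) := by nlinarith
  have hx : 16 ≤ (b : ℝ) ^ (1/3 : ℝ) * log b ^ 2 := by
    have hl4 : 4 ≤ log b ^ 2 := by nlinarith
    nlinarith
  have hcube : (b : ℝ) = ((b : ℝ) ^ (1/3 : ℝ)) ^ 3 := by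
    rw [← rpow_natCast, ← rpow_mul (by positivity)]
    norm_num
  have hδ : 0 ≤ δ b := by unfold δ; positivity
  have hδ₁ : δ b ≤ 1 := by
    rw [δ, div_le_one (by positivity)]
    nlinarith
  have hL : 2 ≤ L b := Nat.le_floor (by push_cast; linarith)
  obtain ⟨hp, hE⟩ := integral_tau ho hδ hδ₁ hL hsub rfl
  rw [hE]
  exact expectation_estimate hcube hl hBl (Nat.floor_le (by positivity)) (Nat.lt_floor_add_one _)
    (lamHat_pos ho) (lamHat_le ho) rfl hp
end
end

section
/- There exist a constant C > 0 and b₀ such that for all integers b ≥ b₀ and all points o ∈ ℝ₊² with D_δ(o) ⊆ ℝ₊², the probability that τ_b < b^{1/3}/(16·(log b)⁶) is at most C·(log b)⁶/b^{1/3}. -/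
open MeasureTheory Real Set
open scoped ENNReal

noncomputable section

/-- For `b` independent points with law `μ`, the probability that each of the disjoint sets `A s`,
all of the same measure `p`, contains exactly one of the points. -/
lemma measureReal_pi_forall_ncard_eq_one {ι α : Type*} [Fintype ι] [MeasurableSpace α]
    (μ : Measure α) [IsProbabilityMeasure μ] (b : ℕ) (A : ι → Set α)
    (hA : ∀ s, MeasurableSet (A s)) (hd : Pairwise (Function.onFun Disjoint A)) (p : ℝ)
    (hp : ∀ s, μ.real (A s) = p) :
    (Measure.pi fun _ : Fin b => μ).real {ω | ∀ s, Set.ncard {j | ω j ∈ A s} = 1} =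
      b.descFactorial (Fintype.card ι) *
        (p ^ Fintype.card ι * (1 - Fintype.card ι * p) ^ (b - Fintype.card ι)) := by
  classical
  let B : (ι ↪ Fin b) → Fin b → Set α := fun f j =>
    if h : j ∈ Finset.univ.map f then A (Finset.mem_map.1 h).choose else (⋃ s, A s)ᶜ
  have hBf : ∀ (f : ι ↪ Fin b) s, B f (f s) = A s := by
    intro f s
    have h : f s ∈ Finset.univ.map f := by simp
    have h2 := (Finset.mem_map.1 h).choose_spec.2
    simp only [B, dif_pos h]
    rw [f.injective h2]
  have hBn : ∀ (f : ι ↪ Fin b) j, j ∉ Finset.univ.map f → B f j = (⋃ s, A s)ᶜ := by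
    intro f j h
    simp only [B, dif_neg h]
  have hmeas : ∀ f j, MeasurableSet (B f j) := by
    intro f j
    by_cases h : j ∈ Finset.univ.map f
    · simp only [B, dif_pos h]; exact hA _
    · rw [hBn f j h]; exact (MeasurableSet.iUnion hA).compl
  have hmem : ∀ (f : ι ↪ Fin b) (ω : Fin b → α), ω ∈ Set.univ.pi (B f) →
      ∀ s, {j | ω j ∈ A s} = {f s} := by
    intro f ω hω s
    ext j
    simp only [Set.mem_ofPred_eq, Set.mem_singleton_iff]
    constructor
    · intro hj
      have hωj := hω j (Set.mem_univ _)
      by_cases h : j ∈ Finset.univ.map f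
      · obtain ⟨t, -, rfl⟩ := Finset.mem_map.1 h
        rw [hBf] at hωj
        by_contra hne
        exact Set.disjoint_left.1 (hd (fun hts => hne (by rw [hts]))) hωj hj
      · rw [hBn f j h] at hωj
        exact absurd (Set.mem_iUnion.2 ⟨s, hj⟩) hωj
    · rintro rfl
      have := hω (f s) (Set.mem_univ _)
      rwa [hBf] at this
  have hset : {ω : Fin b → α | ∀ s, Set.ncard {j | ω j ∈ A s} = 1} =
      ⋃ f : ι ↪ Fin b, Set.univ.pi (B f) := by
    ext ω
    simp only [Set.mem_ofPred_eq, Set.mem_iUnion]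
    constructor
    · intro h
      choose f hf using fun s => Set.ncard_eq_one.1 (h s)
      have hin : ∀ s, ω (f s) ∈ A s := fun s => by
        have : f s ∈ {j | ω j ∈ A s} := by rw [hf s]; rfl
        exact this
      have hinj : Function.Injective f := by
        intro s t hst
        by_contra hne
        exact Set.disjoint_left.1 (hd hne) (hin s) (hst ▸ hin t)
      refine ⟨⟨f, hinj⟩, fun j _ => ?_⟩
      by_cases hj : j ∈ Finset.univ.map (⟨f, hinj⟩ : ι ↪ Fin b)
      · obtain ⟨t, -, rfl⟩ := Finset.mem_map.1 hj
        rw [hBf]; exact hin t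
      · rw [hBn _ j hj]
        rintro hmem
        obtain ⟨s, hs⟩ := Set.mem_iUnion.1 hmem
        have : j ∈ {j | ω j ∈ A s} := hs
        rw [hf s] at this
        exact hj (Finset.mem_map.2 ⟨s, Finset.mem_univ _, this.symm⟩)
    · rintro ⟨f, hf⟩ s
      rw [hmem f ω hf s, Set.ncard_singleton]
  have hdisj : Pairwise (Function.onFun Disjoint fun f : ι ↪ Fin b => Set.univ.pi (B f)) := by
    intro f g hfg
    refine Set.disjoint_left.2 fun ω hf hg => hfg ?_
    ext s
    have := (hmem f ω hf s).symm.trans (hmem g ω hg s)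
    rw [Set.singleton_eq_singleton_iff.1 this]
  have hcompl : μ.real (⋃ s, A s)ᶜ = 1 - Fintype.card ι * p := by
    rw [probReal_compl_eq_one_sub (MeasurableSet.iUnion hA), measureReal_iUnion_fintype hd hA]
    simp [hp]
  have hterm : ∀ f : ι ↪ Fin b, (Measure.pi fun _ : Fin b => μ).real (Set.univ.pi (B f)) =
      p ^ Fintype.card ι * (1 - Fintype.card ι * p) ^ (b - Fintype.card ι) := by
    intro f
    rw [measureReal_def, Measure.pi_pi, ENNReal.toReal_prod]
    have : ∀ j, (μ (B f j)).toReal =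
        if j ∈ Finset.univ.map f then p else 1 - Fintype.card ι * p := by
      intro j
      split_ifs with h
      · obtain ⟨t, -, rfl⟩ := Finset.mem_map.1 h
        rw [hBf]; exact hp t
      · rw [hBn f j h]; exact hcompl
    simp_rw [this]
    rw [Finset.prod_ite, Finset.prod_const, Finset.prod_const, Finset.filter_mem_eq_inter,
      Finset.univ_inter, Finset.filter_notMem_eq_sdiff, ← Finset.compl_eq_univ_sdiff,
      Finset.card_compl]
    simp
  rw [hset, measureReal_iUnion_fintype hdisj
    (fun f => MeasurableSet.univ_pi (hmeas f))]
  simp [hterm]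

/-- A lower tail bound by the second moment method for a sum of negatively correlated
indicators with equal probabilities. -/
lemma measure_sum_indicator_le_half {Ω : Type*} [MeasurableSpace Ω] (P : Measure Ω)
    [IsProbabilityMeasure P] (n : ℕ) (E : ℕ → Set Ω) (hE : ∀ i, MeasurableSet (E i)) (e : ℝ)
    (he : ∀ i < n, P.real (E i) = e)
    (hee : ∀ i < n, ∀ j < n, i ≠ j → P.real (E i ∩ E j) ≤ e ^ 2) (hpos : 0 < n * e) :
    P {ω | ∑ i ∈ Finset.range n, (E i).indicator (fun _ => (1 : ℝ)) ω ≤ n * e / 2} ≤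
      ENNReal.ofReal (4 / (n * e)) := by
  set Y : Ω → ℝ := fun ω => ∑ i ∈ Finset.range n, (E i).indicator (fun _ => (1 : ℝ)) ω with hY
  have hmem : ∀ i, MemLp ((E i).indicator fun _ => (1 : ℝ)) 2 P :=
    fun i => memLp_indicator_const 2 (hE i) 1 (Or.inr (measure_ne_top _ _))
  have hYmem : MemLp Y 2 P := memLp_finsetSum _ fun i _ => hmem i
  have hint : ∀ s : Set Ω, MeasurableSet s → Integrable (s.indicator fun _ => (1 : ℝ)) P :=
    fun s hs => (integrable_const _).indicator hs
  have hmean : ∫ ω, Y ω ∂P = n * e := by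
    simp only [hY]
    rw [integral_finsetSum _ fun i _ => hint _ (hE i)]
    simp_rw [integral_indicator_const (1 : ℝ) (hE _)]
    rw [Finset.sum_congr rfl fun i hi => by rw [he i (Finset.mem_range.1 hi)]]
    simp
  have hsq : ∫ ω, (Y ^ 2) ω ∂P ≤ n * e + (n * e) ^ 2 := by
    have h1 : ∀ ω, (Y ^ 2) ω = ∑ i ∈ Finset.range n, ∑ j ∈ Finset.range n,
        (E i ∩ E j).indicator (fun _ => (1 : ℝ)) ω := by
      intro ω
      simp only [Pi.pow_apply, hY, sq, Finset.sum_mul_sum]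
      refine Finset.sum_congr rfl fun i _ => Finset.sum_congr rfl fun j _ => ?_
      by_cases h1 : ω ∈ E i <;> by_cases h2 : ω ∈ E j <;> simp [h1, h2]
    simp_rw [h1]
    rw [integral_finsetSum _ fun i _ => integrable_finsetSum _ fun j _ =>
      hint _ ((hE i).inter (hE j))]
    simp_rw [integral_finsetSum (Finset.range n) fun j _ => hint _ ((hE _).inter (hE j)),
      integral_indicator_const (1 : ℝ) ((hE _).inter (hE _))]
    calc ∑ i ∈ Finset.range n, ∑ j ∈ Finset.range n, P.real (E i ∩ E j) • (1 : ℝ)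
        ≤ ∑ i ∈ Finset.range n, ∑ j ∈ Finset.range n, (e ^ 2 + if i = j then e else 0) := by
          refine Finset.sum_le_sum fun i hi => Finset.sum_le_sum fun j hj => ?_
          have hi := Finset.mem_range.1 hi
          have hj := Finset.mem_range.1 hj
          by_cases hij : i = j
          · subst hij
            simp [he i hi, sq_nonneg]
          · simpa [hij] using hee i hi j hj hij
      _ = n * e + (n * e) ^ 2 := by
          have : ∀ i ∈ Finset.range n,
              ∑ j ∈ Finset.range n, (e ^ 2 + if i = j then e else 0) = n * e ^ 2 + e := by
            intro i hi
            rw [Finset.sum_add_distrib, Finset.sum_ite_eq, if_pos hi]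
            simp
          rw [Finset.sum_congr rfl this]
          simp
          ring
  have hvar : ProbabilityTheory.variance Y P ≤ n * e := by
    rw [ProbabilityTheory.variance_eq_sub hYmem, hmean]
    linarith
  calc P {ω | Y ω ≤ n * e / 2}
      ≤ P {ω | n * e / 2 ≤ |Y ω - ∫ x, Y x ∂P|} := by
        refine measure_mono fun ω hω => ?_
        simp only [Set.mem_ofPred_eq] at hω ⊢
        rw [hmean, abs_sub_comm]
        exact le_trans (by linarith) (le_abs_self _)
    _ ≤ ENNReal.ofReal (ProbabilityTheory.variance Y P / (n * e / 2) ^ 2) :=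
        ProbabilityTheory.meas_ge_le_variance_div_sq hYmem (by linarith)
    _ ≤ ENNReal.ofReal (4 / (n * e)) := by
        refine ENNReal.ofReal_le_ofReal ?_
        rw [div_le_div_iff₀ (by positivity) hpos]
        nlinarith

/-- The open circular sector of radius `ρ` at the origin with arguments between `α` and `β`. -/
def argSector (ρ α β : ℝ) : Set ℂ := {w | 0 < ‖w‖ ∧ ‖w‖ ≤ ρ ∧ Complex.arg w ∈ Ioo α β}

lemma measurableSet_argSector (ρ α β : ℝ) : MeasurableSet (argSector ρ α β) := by
  refine (measurableSet_lt measurable_const measurable_norm).inter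
    ((measurableSet_le measurable_norm measurable_const).inter ?_)
  exact Complex.measurable_arg measurableSet_Ioo

lemma volume_argSector {ρ α β : ℝ} (hρ : 0 ≤ ρ) (hα : -π ≤ α) (hβ : β ≤ π) :
    volume (argSector ρ α β) = ENNReal.ofReal (ρ ^ 2 / 2 * (β - α)) := by
  rw [← lintegral_indicator_one (measurableSet_argSector ρ α β),
    ← Complex.lintegral_comp_polarCoord_symm]
  have hprod : MeasurableSet (Ioc 0 ρ ×ˢ Ioo α β : Set (ℝ × ℝ)) :=
    measurableSet_Ioc.prod measurableSet_Ioo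
  have hsub : (Ioc 0 ρ ×ˢ Ioo α β : Set (ℝ × ℝ)) ⊆ polarCoord.target := by
    rintro ⟨r, t⟩ ⟨hr, ht⟩
    exact ⟨hr.1, lt_of_le_of_lt hα ht.1, lt_of_lt_of_le ht.2 hβ⟩
  have hcongr : ∫⁻ p in polarCoord.target, ENNReal.ofReal p.1 •
        (argSector ρ α β).indicator (1 : ℂ → ℝ≥0∞) (Complex.polarCoord.symm p) =
      ∫⁻ p in polarCoord.target,
        (Ioc 0 ρ ×ˢ Ioo α β).indicator (fun p : ℝ × ℝ => ENNReal.ofReal p.1) p := by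
    refine setLIntegral_congr_fun polarCoord.open_target.measurableSet fun p hp => ?_
    obtain ⟨hp1, hp2⟩ : 0 < p.1 ∧ p.2 ∈ Ioo (-π) π := hp
    have harg : Complex.arg (Complex.polarCoord.symm p) = p.2 := by
      rw [Complex.polarCoord_symm_apply]
      push_cast
      exact Complex.arg_mul_cos_add_sin_mul_I hp1 ⟨hp2.1, hp2.2.le⟩
    have hiff : Complex.polarCoord.symm p ∈ argSector ρ α β ↔ p ∈ Ioc 0 ρ ×ˢ Ioo α β := by
      simp only [argSector, Set.mem_ofPred_eq, harg, Complex.norm_polarCoord_symm,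
        abs_of_pos hp1, Set.mem_prod, Set.mem_Ioc, and_assoc]
    by_cases h : p ∈ Ioc 0 ρ ×ˢ Ioo α β
    · simp only [Set.indicator_of_mem h, Set.indicator_of_mem (hiff.2 h), Pi.one_apply,
        smul_eq_mul, mul_one]
    · simp only [Set.indicator_of_notMem h, Set.indicator_of_notMem (mt hiff.1 h), smul_eq_mul,
        mul_zero]
  rw [hcongr, setLIntegral_indicator hprod, Set.inter_eq_left.2 hsub, Measure.volume_eq_prod,
    ← Measure.prod_restrict]
  have hfst := lintegral_prod_mul (μ := volume.restrict (Ioc 0 ρ)) (ν := volume.restrict (Ioo α β))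
    (f := fun r => ENNReal.ofReal r) (g := fun _ => 1)
    ENNReal.measurable_ofReal.aemeasurable aemeasurable_const
  simp only [mul_one] at hfst
  rw [hfst, ← ofReal_integral_eq_lintegral_ofReal, ← intervalIntegral.integral_of_le hρ,
    integral_id, lintegral_one, Measure.restrict_apply_univ, Real.volume_Ioo,
    ← ENNReal.ofReal_mul (by simp; positivity)]
  · simp
  · exact (continuous_id.intervalIntegrable 0 ρ).1
  · exact (ae_restrict_mem measurableSet_Ioc).mono fun x hx => hx.1.le

/-- The plane seen from `o` as the complex plane, rotated by `φ`. -/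
def rotCoord (o : Plane) (φ : ℝ) (p : Plane) : ℂ :=
  (Complex.orthonormalBasisOneI.repr.symm.trans (rotation (Circle.exp φ))) (p - o)

lemma measurePreserving_rotCoord (o : Plane) (φ : ℝ) :
    MeasurePreserving (rotCoord o φ) volume volume :=
  (LinearIsometryEquiv.measurePreserving _).comp (measurePreserving_sub_right volume o)

lemma rotCoord_injective (o : Plane) (φ : ℝ) : Function.Injective (rotCoord o φ) :=
  (LinearIsometryEquiv.injective _).comp sub_left_injective

lemma rotCoord_polarPt (o : Plane) (φ r t : ℝ) :
    rotCoord o φ (polarPt o r t) =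
      r * (Complex.cos ((t + φ : ℝ) : ℂ) + Complex.sin ((t + φ : ℝ) : ℂ) * Complex.I) := by
  rw [rotCoord, polarPt, add_sub_cancel_left, LinearIsometryEquiv.trans_apply,
    Complex.orthonormalBasisOneI_repr_symm_apply, rotation_apply, Circle.coe_exp,
    ← Complex.exp_mul_I]
  have h : ((r • pt (Real.cos t) (Real.sin t) : Plane) 0 : ℂ) +
      ((r • pt (Real.cos t) (Real.sin t) : Plane) 1 : ℂ) * Complex.I =
      r * Complex.exp (t * Complex.I) := by
    simp [pt, Complex.exp_mul_I]
    ring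
  rw [h, mul_left_comm, ← Complex.exp_add]
  push_cast
  ring_nf

/-- The points with polar coordinates `(r, t)` relative to `o`, where `0 < r ≤ ρ` and
`a ≤ t ≤ c`. -/
def polarSector (o : Plane) (ρ a c : ℝ) : Set Plane :=
  {p | ∃ r t : ℝ, 0 < r ∧ r ≤ ρ ∧ a ≤ t ∧ t ≤ c ∧ p = polarPt o r t}

lemma volume_rotCoord_preimage_ray (o : Plane) (φ α : ℝ) :
    volume (rotCoord o φ ⁻¹' (Submodule.span ℝ {Complex.exp (α * Complex.I)} : Set ℂ)) = 0 := by
  have hne : Submodule.span ℝ {Complex.exp (α * Complex.I)} ≠ ⊤ := by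
    intro h
    have h1 := finrank_span_singleton (K := ℝ) (Complex.exp_ne_zero (α * Complex.I))
    rw [h, finrank_top, Complex.finrank_real_complex] at h1
    norm_num at h1
  rw [(measurePreserving_rotCoord o φ).measure_preimage]
  · exact Measure.addHaar_submodule _ _ hne
  · exact (Submodule.closed_of_finiteDimensional _).measurableSet.nullMeasurableSet

lemma preimage_argSector_ae_eq (o : Plane) (φ : ℝ) {ρ a c : ℝ} (ha : -π ≤ a + φ)
    (hc : c + φ ≤ π) :
    rotCoord o φ ⁻¹' argSector ρ (a + φ) (c + φ) =ᵐ[volume] polarSector o ρ a c := by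
  have hsub : rotCoord o φ ⁻¹' argSector ρ (a + φ) (c + φ) ⊆ polarSector o ρ a c := by
    intro p hp
    obtain ⟨h0, h1, h2, h3⟩ := hp
    refine ⟨‖rotCoord o φ p‖, (rotCoord o φ p).arg - φ, h0, h1, by linarith, by linarith, ?_⟩
    apply rotCoord_injective o φ
    rw [rotCoord_polarPt, sub_add_cancel, Complex.norm_mul_cos_add_sin_mul_I]
  refine (LE.le.eventuallyLE hsub).antisymm (ae_le_set.2 ?_)
  refine measure_mono_null (t := rotCoord o φ ⁻¹'
      (Submodule.span ℝ {Complex.exp ((a + φ : ℝ) * Complex.I)} : Set ℂ) ∪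
    rotCoord o φ ⁻¹' (Submodule.span ℝ {Complex.exp ((c + φ : ℝ) * Complex.I)} : Set ℂ)) ?_
    (measure_union_null (volume_rotCoord_preimage_ray o φ _) (volume_rotCoord_preimage_ray o φ _))
  rintro p ⟨⟨r, t, hr0, hr, hat, htc, rfl⟩, hp⟩
  have hspan : ∀ s : ℝ, s = t →
      rotCoord o φ (polarPt o r t) ∈
        Submodule.span ℝ {Complex.exp ((s + φ : ℝ) * Complex.I)} := by
    rintro s rfl
    rw [rotCoord_polarPt, ← Complex.exp_mul_I, ← Complex.real_smul]
    exact Submodule.smul_mem _ _ (Submodule.mem_span_singleton_self _)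
  by_cases h1 : a = t
  · exact Or.inl (hspan a h1)
  by_cases h2 : c = t
  · exact Or.inr (hspan c h2)
  refine absurd ?_ hp
  have h1 : a < t := lt_of_le_of_ne hat h1
  have h2 : t < c := lt_of_le_of_ne htc (Ne.symm h2)
  have hnorm : ‖rotCoord o φ (polarPt o r t)‖ = r := by
    rw [rotCoord_polarPt, ← Complex.exp_mul_I, norm_mul, Complex.norm_exp_ofReal_mul_I]
    simp [abs_of_pos hr0]
  refine ⟨by rw [hnorm]; exact hr0, by rw [hnorm]; exact hr, ?_⟩
  rw [rotCoord_polarPt, Complex.arg_mul_cos_add_sin_mul_I hr0 ⟨by linarith, by linarith⟩]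
  exact ⟨by linarith, by linarith⟩

lemma volume_Dhat_le (o : Plane) : volume (Dhat o) ≤ ENNReal.ofReal π := by
  refine (measure_mono Set.inter_subset_left).trans ?_
  rw [D, EuclideanSpace.volume_closedBall_fin_two]
  simp

lemma le_volume_Dhat {o : Plane} (ho : o ∈ quad) : ENNReal.ofReal (π / 16) ≤ volume (Dhat o) := by
  have hsub : Metric.closedBall (o + pt (1 / 2) (1 / 2)) (1 / 4) ⊆ Dhat o := by
    intro p hp
    rw [Metric.mem_closedBall, EuclideanSpace.dist_eq, Real.sqrt_le_left (by norm_num),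
      Fin.sum_univ_two] at hp
    simp only [Real.dist_eq, sq_abs, pt, PiLp.add_apply] at hp
    simp only [WithLp.equiv_symm_apply, Matrix.cons_val_zero, Matrix.cons_val_one] at hp
    have h0 : |p 0 - (o 0 + 1 / 2)| ≤ 1 / 4 := abs_le_of_sq_le_sq (by nlinarith) (by norm_num)
    have h1 : |p 1 - (o 1 + 1 / 2)| ≤ 1 / 4 := abs_le_of_sq_le_sq (by nlinarith) (by norm_num)
    rw [abs_le] at h0 h1
    obtain ⟨ho0, ho1⟩ := ho
    refine ⟨?_, by linarith, by linarith⟩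
    rw [D, Metric.mem_closedBall, EuclideanSpace.dist_eq, Real.sqrt_le_left (by norm_num),
      Fin.sum_univ_two]
    simp only [Real.dist_eq, sq_abs]
    nlinarith
  refine le_trans (le_of_eq ?_) (measure_mono hsub)
  rw [EuclideanSpace.volume_closedBall_fin_two, ← ENNReal.ofReal_pow (by norm_num),
    ← ENNReal.ofReal_mul (by norm_num)]
  congr 1
  ring

lemma measurableSet_ncard_eq_one {ι α : Type*} [Finite ι] [MeasurableSpace α] {A : Set α}
    (hA : MeasurableSet A) : MeasurableSet {ω : ι → α | Set.ncard {j | ω j ∈ A} = 1} := by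
  have h : {ω : ι → α | Set.ncard {j | ω j ∈ A} = 1} = ⋃ j, ⋂ k, {ω | ω k ∈ A ↔ k = j} := by
    ext ω
    simp [Set.ncard_eq_one, Set.ext_iff]
  have heval : ∀ k, MeasurableSet ((fun ω : ι → α => ω k) ⁻¹' A) :=
    fun k => measurableSet_preimage (measurable_pi_apply k) hA
  rw [h]
  refine MeasurableSet.iUnion fun j => MeasurableSet.iInter fun k => ?_
  by_cases hk : k = j
  · simp only [hk, iff_true]
    exact heval j
  · simp only [hk, iff_false]
    exact (heval k).compl

/-- The negative correlation inequality for occupancy of four versus two cells. -/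
lemma descFactorial_four_mul_le {b : ℕ} (hb : 4 ≤ b) {p : ℝ} (hp : 0 ≤ p) (hpb : 16 * (p * b) ≤ 1) :
    (b.descFactorial 4 : ℝ) * (p ^ 4 * (1 - 4 * p) ^ (b - 4)) ≤
      ((b.descFactorial 2 : ℝ) * (p ^ 2 * (1 - 2 * p) ^ (b - 2))) ^ 2 := by
  obtain ⟨m, rfl⟩ := Nat.exists_eq_add_of_le' hb
  have hd4 : ((m + 4).descFactorial 4 : ℝ) = (m + 4) * (m + 3) * ((m + 2) * (m + 1)) := by
    simp only [Nat.descFactorial_succ, Nat.descFactorial_zero]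
    rw [show m + 4 - 3 = m + 1 by omega, show m + 4 - 2 = m + 2 by omega,
      show m + 4 - 1 = m + 3 by omega]
    push_cast
    ring
  have hd2 : ((m + 4).descFactorial 2 : ℝ) = (m + 4) * (m + 3) := by
    simp only [Nat.descFactorial_succ, Nat.descFactorial_zero]
    rw [show m + 4 - 1 = m + 3 by omega]
    push_cast
    ring
  rw [hd4, hd2, Nat.add_sub_cancel, show m + 4 - 2 = m + 2 by omega]
  push_cast at hpb
  have hm : (0 : ℝ) ≤ m := m.cast_nonneg
  have hp1 : 64 * p ≤ 1 := by nlinarith [mul_nonneg hp hm]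
  have hpow : (1 - 4 * p) ^ m ≤ ((1 - 2 * p) ^ m) ^ 2 := by
    rw [pow_right_comm]
    exact pow_le_pow_left₀ (by linarith) (by nlinarith [sq_nonneg p]) m
  have hq : 1 - 8 * p ≤ (1 - 2 * p) ^ 4 := by
    have := one_add_mul_le_pow (show (-2 : ℝ) ≤ -(2 * p) by linarith) 4
    push_cast at this
    rw [sub_eq_add_neg 1 (2 * p)]
    linarith
  have hcoef : ((m : ℝ) + 2) * (m + 1) ≤ (m + 4) * (m + 3) * (1 - 2 * p) ^ 4 :=
    calc ((m : ℝ) + 2) * (m + 1) ≤ (m + 4) * (m + 3) * (1 - 8 * p) := by nlinarith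
      _ ≤ _ := mul_le_mul_of_nonneg_left hq (by positivity)
  calc ((m : ℝ) + 4) * (m + 3) * ((m + 2) * (m + 1)) * (p ^ 4 * (1 - 4 * p) ^ m)
      ≤ (m + 4) * (m + 3) * ((m + 4) * (m + 3) * (1 - 2 * p) ^ 4) *
          (p ^ 4 * ((1 - 2 * p) ^ m) ^ 2) := by
        have h4 : 0 ≤ (1 - 4 * p) ^ m := pow_nonneg (by linarith) m
        gcongr
    _ = _ := by ring

/-- Lower bound for the expected number of antipodal pairs of cells occupied exactly once. -/
lemma le_expected_pairs {b : ℕ} (hb : 4 ≤ b) {x l n p : ℝ} (hx : 0 < x) (hxb : x ^ 3 = b)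
    (hl : 4 ≤ l) (hn : n ≤ x * l ^ 2) (hn0 : 0 < n) (hpn : 1 ≤ 2 * x ^ 2 * l ^ 2 * (n * p))
    (hpb : 16 * (p * b) ≤ 1) :
    x / (8 * l ^ 6) ≤ n * ((b.descFactorial 2 : ℝ) * (p ^ 2 * (1 - 2 * p) ^ (b - 2))) := by
  obtain ⟨m, rfl⟩ := Nat.exists_eq_add_of_le' hb
  have hd2 : ((m + 4).descFactorial 2 : ℝ) = (m + 4) * (m + 3) := by
    simp only [Nat.descFactorial_succ, Nat.descFactorial_zero]
    rw [show m + 4 - 1 = m + 3 by omega]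
    push_cast
    ring
  rw [hd2, show m + 4 - 2 = m + 2 by omega]
  push_cast at hpb hxb
  have hm : (0 : ℝ) ≤ m := m.cast_nonneg
  have hl0 : 0 < l := by linarith
  have hnp : 1 / (2 * x ^ 2 * l ^ 2) ≤ n * p := by
    rw [div_le_iff₀ (by positivity)]
    linarith
  have hp0 : 0 < p := by
    by_contra h
    have : n * p ≤ 0 := mul_nonpos_of_nonneg_of_nonpos hn0.le (not_lt.1 h)
    have h2 : 0 < 1 / (2 * x ^ 2 * l ^ 2) := by positivity
    linarith
  have hp : 1 / (2 * x ^ 3 * l ^ 4) ≤ p := by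
    rw [div_le_iff₀ (by positivity)]
    calc (1 : ℝ) ≤ 2 * x ^ 2 * l ^ 2 * (n * p) := hpn
      _ ≤ 2 * x ^ 2 * l ^ 2 * (x * l ^ 2 * p) := by gcongr
      _ = _ := by ring
  have hpow : 7 / 8 ≤ (1 - 2 * p) ^ (m + 2) := by
    have := one_add_mul_le_pow (show (-2 : ℝ) ≤ -(2 * p) by nlinarith) (m + 2)
    push_cast at this
    rw [sub_eq_add_neg 1 (2 * p)]
    nlinarith
  have h34 : 3 / 4 * x ^ 3 ≤ (m : ℝ) + 3 := by rw [hxb]; linarith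
  calc x / (8 * l ^ 6)
      ≤ x ^ 3 * (3 / 4 * x ^ 3) * ((1 / (2 * x ^ 2 * l ^ 2)) * (1 / (2 * x ^ 3 * l ^ 4)) *
          (7 / 8)) := by
        have : x ^ 3 * (3 / 4 * x ^ 3) * ((1 / (2 * x ^ 2 * l ^ 2)) *
            (1 / (2 * x ^ 3 * l ^ 4)) * (7 / 8)) = 21 / 16 * (x / (8 * l ^ 6)) := by
          field_simp
          norm_num
        rw [this]
        have h0 : 0 ≤ x / (8 * l ^ 6) := by positivity
        linarith
    _ ≤ ((m : ℝ) + 4) * (m + 3) * (n * p * p * (1 - 2 * p) ^ (m + 2)) := by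
        rw [← hxb]
        gcongr
    _ = _ := by ring

/-- The open version of the `k`-th of the `2n` congruent sectors of the disk of radius `ρ` at `o`. -/
def openCell (o : Plane) (ρ : ℝ) (n k : ℕ) : Set Plane :=
  rotCoord o (π / n / 2 - π) ⁻¹' argSector ρ (((k : ℝ) - 1 / 2) * (π / n) + (π / n / 2 - π))
    (((k : ℝ) + 1 / 2) * (π / n) + (π / n / 2 - π))

lemma measurableSet_openCell (o : Plane) (ρ : ℝ) (n k : ℕ) : MeasurableSet (openCell o ρ n k) :=
  (measurePreserving_rotCoord o _).measurable (measurableSet_argSector _ _ _)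

lemma pairwise_disjoint_openCell (o : Plane) (ρ : ℝ) (n : ℕ) :
    Pairwise (Function.onFun Disjoint (openCell o ρ n)) := by
  have hlt : ∀ k l : ℕ, k < l → Disjoint (openCell o ρ n k) (openCell o ρ n l) := by
    intro k l hkl
    refine Set.disjoint_left.2 ?_
    rintro p ⟨-, -, -, hk⟩ ⟨-, -, hl, -⟩
    have h1 : ((k : ℝ) + 1 / 2) ≤ (l : ℝ) - 1 / 2 := by
      have : (k : ℝ) + 1 ≤ l := by exact_mod_cast hkl
      linarith
    have h2 := mul_le_mul_of_nonneg_right h1 (show 0 ≤ π / (n : ℝ) by positivity)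
    linarith
  intro k l hkl
  rcases lt_or_gt_of_ne hkl with h | h
  · exact hlt k l h
  · exact (hlt l k h).symm

lemma openCell_angle_bounds {n k : ℕ} (hk : k < 2 * n) :
    -π ≤ ((k : ℝ) - 1 / 2) * (π / n) + (π / n / 2 - π) ∧
      ((k : ℝ) + 1 / 2) * (π / n) + (π / n / 2 - π) ≤ π := by
  have hn : (0 : ℝ) < n := by
    have : 0 < n := by omega
    exact_mod_cast this
  have h1 : ((k : ℝ) + 1) * (π / n) ≤ 2 * n * (π / n) := by
    refine mul_le_mul_of_nonneg_right ?_ (by positivity)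
    exact_mod_cast hk
  have h2 : 2 * (n : ℝ) * (π / n) = 2 * π := by field_simp
  have h3 : 0 ≤ (k : ℝ) * (π / n) := by positivity
  constructor <;> nlinarith

lemma volume_openCell (o : Plane) {ρ : ℝ} (hρ : 0 ≤ ρ) {n k : ℕ} (hk : k < 2 * n) :
    volume (openCell o ρ n k) = ENNReal.ofReal (ρ ^ 2 / 2 * (π / n)) := by
  obtain ⟨h1, h2⟩ := openCell_angle_bounds hk
  have h3 : 0 ≤ π / (n : ℝ) := by positivity
  rw [openCell, (measurePreserving_rotCoord o _).measure_preimage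
    (measurableSet_argSector _ _ _).nullMeasurableSet, volume_argSector hρ h1 h2]
  congr 1
  ring

lemma openCell_ae_eq (o : Plane) (ρ : ℝ) {n k : ℕ} (hk : k < 2 * n) :
    openCell o ρ n k =ᵐ[volume]
      polarSector o ρ (((k : ℝ) - 1 / 2) * (π / n)) (((k : ℝ) + 1 / 2) * (π / n)) :=
  preimage_argSector_ae_eq o _ (openCell_angle_bounds hk).1 (openCell_angle_bounds hk).2

lemma openCell_subset (o : Plane) (ρ : ℝ) (n k : ℕ) : openCell o ρ n k ⊆ D o ρ := by
  rintro p ⟨-, hp, -⟩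
  rw [rotCoord, LinearIsometryEquiv.norm_map] at hp
  rwa [D, Metric.mem_closedBall, dist_eq_norm]

lemma Qsector_eq_polarSector (o : Plane) (b : ℝ) (i : ℕ) :
    Qsector o b i = polarSector o (δ b) (((i : ℝ) - 1 / 2) * (π / L b))
      (((i : ℝ) + 1 / 2) * (π / L b)) := rfl

lemma Rsector_eq_polarSector (o : Plane) {b : ℝ} (hL : 0 < L b) (i : ℕ) :
    Rsector o b i = polarSector o (δ b) ((((i + L b : ℕ) : ℝ) - 1 / 2) * (π / L b))
      ((((i + L b : ℕ) : ℝ) + 1 / 2) * (π / L b)) := by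
  have h : (L b : ℝ) * (π / L b) = π := by
    have : (L b : ℝ) ≠ 0 := by exact_mod_cast hL.ne'
    field_simp
  ext p
  refine exists_congr fun r => exists_congr fun t => and_congr_right fun _ =>
    and_congr_right fun _ => ?_
  push_cast
  refine and_congr ?_ (and_congr_left fun _ => ?_) <;> rw [θb] <;>
    constructor <;> intro h' <;> linarith

lemma unif_real_of_subset {S T : Set Plane} (hTS : T ⊆ S) (hT : MeasurableSet T) :
    (unif S).real T = (volume T).toReal / (volume S).toReal := by
  rw [measureReal_def, unif, Measure.smul_apply, Measure.restrict_apply hT,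
    Set.inter_eq_left.2 hTS, smul_eq_mul, ENNReal.toReal_mul, ENNReal.toReal_inv]
  ring

/-- The event that the antipodal sectors with indices `i` and `i + n` each contain exactly one
point. -/
def pairEvent (o : Plane) (ρ : ℝ) (b n i : ℕ) : Set (Fin b → Plane) :=
  {ω | ∀ s : Fin 2, Set.ncard {j | ω j ∈ openCell o ρ n (i + s * n)} = 1}

lemma measurableSet_pairEvent (o : Plane) (ρ : ℝ) (b n i : ℕ) :
    MeasurableSet (pairEvent o ρ b n i) := by
  have h : pairEvent o ρ b n i =
      ⋂ s : Fin 2, {ω | Set.ncard {j | ω j ∈ openCell o ρ n (i + s * n)} = 1} := by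
    ext ω
    simp [pairEvent]
  rw [h]
  exact MeasurableSet.iInter fun s =>
    measurableSet_ncard_eq_one (measurableSet_openCell o ρ n _)

lemma tau_eq_ae {o : Plane} (ho : o ∈ quad) {b : ℕ} (hL : 0 < L b) :
    ∀ᵐ ω ∂ptsMeasure o b, (tau o b ω : ℝ) =
      ∑ i ∈ Finset.range (L b),
        (pairEvent o (δ b) b (L b) i).indicator (fun _ => (1 : ℝ)) ω := by
  have := isProbabilityMeasure_unif_Dhat ho
  have hac : unif (Dhat o) ≪ volume :=
    (Measure.absolutelyContinuous_of_le Measure.restrict_le_self).smul_left _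
  have hae : ∀ᵐ ω ∂ptsMeasure o b, ∀ j, ∀ k ∈ Finset.range (2 * L b),
      (ω j ∈ openCell o (δ b) (L b) k ↔ ω j ∈ polarSector o (δ b)
        (((k : ℝ) - 1 / 2) * (π / L b)) (((k : ℝ) + 1 / 2) * (π / L b))) := by
    refine ae_all_iff.2 fun j => (Filter.eventually_all_finset _).2 fun k hk => ?_
    have h := hac.ae_le (openCell_ae_eq o (δ b) (Finset.mem_range.1 hk)).mem_iff
    exact (Measure.tendsto_eval_ae_ae (μ := fun _ : Fin b => unif (Dhat o)) (i := j)).eventually h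
  filter_upwards [hae] with ω hω
  rw [tau]
  push_cast
  refine Finset.sum_congr rfl fun i hi => ?_
  have hi := Finset.mem_range.1 hi
  have hQ : {j | ω j ∈ openCell o (δ b) (L b) i} = {j | ω j ∈ Qsector o b i} := by
    ext j
    rw [Qsector_eq_polarSector]
    exact hω j i (Finset.mem_range.2 (by omega))
  have hR : {j | ω j ∈ openCell o (δ b) (L b) (i + L b)} = {j | ω j ∈ Rsector o b i} := by
    ext j
    rw [Rsector_eq_polarSector o hL]
    exact hω j (i + L b) (Finset.mem_range.2 (by omega))
  have hiff : ω ∈ pairEvent o (δ b) b (L b) i ↔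
      countIn (Qsector o b i) ω = 1 ∧ countIn (Rsector o b i) ω = 1 := by
    simp [pairEvent, Fin.forall_fin_two, countIn, hQ, hR]
  by_cases h : ω ∈ pairEvent o (δ b) b (L b) i
  · rw [Set.indicator_of_mem h, if_pos (hiff.1 h)]
  · rw [Set.indicator_of_notMem h, if_neg (mt hiff.2 h)]

/-- There are `C > 0` and `b₀` such that for all integers `b ≥ b₀` and all
`o ∈ ℝ₊²` with `D_δ(o) ⊆ ℝ₊²`:
`Pr(τ_b < b^{1/3} / (16 (log b)⁶)) ≤ C (log b)⁶ / b^{1/3}`. -/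
theorem tau_lower_tail :
    ∃ C > (0 : ℝ), ∃ b₀ : ℕ, ∀ b : ℕ, b₀ ≤ b → ∀ o : Plane, o ∈ quad → D o (δ b) ⊆ quad →
      ptsMeasure o b
          {ω | (tau o b ω : ℝ) < (b : ℝ) ^ (1/3 : ℝ) / (16 * (Real.log b) ^ 6)} ≤
        ENNReal.ofReal (C * (Real.log b) ^ 6 / (b : ℝ) ^ (1/3 : ℝ)) := by
  refine ⟨32, by norm_num, ⌈Real.exp 4⌉₊, fun b hb o ho hD => ?_⟩
  have hbexp : Real.exp 4 ≤ b := (Nat.le_ceil _).trans (by exact_mod_cast hb)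
  have hbR : (5 : ℝ) ≤ b := by linarith [Real.add_one_le_exp (4 : ℝ)]
  have hb4 : 4 ≤ b := by
    have : (4 : ℝ) ≤ b := by linarith
    exact_mod_cast this
  have hl : 4 ≤ Real.log b := (Real.le_log_iff_exp_le (by linarith)).2 hbexp
  have hδ : δ b = 1 / ((b : ℝ) ^ (1 / 3 : ℝ) * Real.log b) := rfl
  have hLdef : L b = ⌊(b : ℝ) ^ (1 / 3 : ℝ) * Real.log b ^ 2⌋₊ := rfl
  have hx1 : 1 ≤ (b : ℝ) ^ (1 / 3 : ℝ) := Real.one_le_rpow (by linarith) (by norm_num)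
  have hxb : ((b : ℝ) ^ (1 / 3 : ℝ)) ^ 3 = b := by
    rw [← Real.rpow_natCast, ← Real.rpow_mul (by linarith)]
    norm_num
  set x : ℝ := (b : ℝ) ^ (1 / 3 : ℝ)
  set l : ℝ := Real.log b
  have hxl : 16 ≤ x * l ^ 2 := by nlinarith
  have hn_le : (L b : ℝ) ≤ x * l ^ 2 := by
    rw [hLdef]
    exact Nat.floor_le (by positivity)
  have hn_ge : x * l ^ 2 / 2 ≤ L b := by
    have := Nat.lt_floor_add_one (x * l ^ 2)
    rw [← hLdef] at this
    linarith
  have hn0 : (0 : ℝ) < L b := by linarith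
  have hL : 0 < L b := by exact_mod_cast hn0
  have hδ0 : 0 ≤ δ b := by rw [hδ]; positivity
  have hδ1 : δ b ≤ 1 := by
    rw [hδ, div_le_one (by positivity)]
    nlinarith
  have := isProbabilityMeasure_unif_Dhat ho
  set V : ℝ := (volume (Dhat o)).toReal
  have hfin : volume (Dhat o) ≠ ⊤ := ((volume_Dhat_le o).trans_lt ENNReal.ofReal_lt_top).ne
  have hV_le : V ≤ π := ENNReal.toReal_le_of_le_ofReal pi_pos.le (volume_Dhat_le o)
  have hV_ge : π / 16 ≤ V := (ENNReal.ofReal_le_iff_le_toReal hfin).1 (le_volume_Dhat ho)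
  have hV0 : 0 < V := lt_of_lt_of_le (by positivity) hV_ge
  set p : ℝ := δ b ^ 2 / 2 * (π / L b) / V with hp
  have hp0 : 0 ≤ p := by positivity
  have hcell : ∀ k < 2 * L b, (unif (Dhat o)).real (openCell o (δ b) (L b) k) = p := by
    intro k hk
    have hsub : openCell o (δ b) (L b) k ⊆ Dhat o := fun q hq =>
      ⟨Metric.closedBall_subset_closedBall hδ1 (openCell_subset _ _ _ _ hq),
        hD (openCell_subset _ _ _ _ hq)⟩
    rw [unif_real_of_subset hsub (measurableSet_openCell _ _ _ _), volume_openCell o hδ0 hk,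
      ENNReal.toReal_ofReal (by positivity)]
  have hpV : p * (2 * x ^ 2 * l ^ 2 * L b) * V = π := by
    rw [hp, hδ]
    field_simp
  have hpn : 1 ≤ 2 * x ^ 2 * l ^ 2 * (L b * p) := by
    by_contra h
    have := mul_lt_mul_of_pos_right (not_le.1 h) hV0
    nlinarith
  have hpb : 16 * (p * b) ≤ 1 := by
    have h1 : p * (2 * x ^ 2 * l ^ 2 * L b) ≤ 16 := by
      by_contra h
      have := mul_lt_mul_of_pos_right (not_le.1 h) hV0
      nlinarith
    have h2 : p * (2 * x ^ 2 * l ^ 2 * (x * l ^ 2 / 2)) ≤ 16 := le_trans (by gcongr) h1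
    have h3 : p * (2 * x ^ 2 * l ^ 2 * (x * l ^ 2 / 2)) = p * b * l ^ 4 := by
      rw [← hxb]
      ring
    have h4 : (4 : ℝ) ^ 4 ≤ l ^ 4 := by gcongr
    have h5 : 0 ≤ p * b := by positivity
    nlinarith
  have hone : ∀ i < L b, (ptsMeasure o b).real (pairEvent o (δ b) b (L b) i) =
      (b.descFactorial 2 : ℝ) * (p ^ 2 * (1 - 2 * p) ^ (b - 2)) := by
    intro i hi
    have hinj : Function.Injective fun s : Fin 2 => i + s * L b := by
      intro s t hst
      fin_cases s <;> fin_cases t <;> simp at hst ⊢ <;> omega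
    have h := measureReal_pi_forall_ncard_eq_one (unif (Dhat o)) b
      (fun s : Fin 2 => openCell o (δ b) (L b) (i + s * L b))
      (fun s => measurableSet_openCell _ _ _ _)
      (fun s t hst => pairwise_disjoint_openCell o (δ b) (L b) (hinj.ne hst)) p
      (fun s => hcell _ (by fin_cases s <;> simp <;> omega))
    simp only [Fintype.card_fin, Nat.cast_ofNat] at h
    exact h
  have htwo : ∀ i < L b, ∀ j < L b, i ≠ j →
      (ptsMeasure o b).real (pairEvent o (δ b) b (L b) i ∩ pairEvent o (δ b) b (L b) j) ≤
        ((b.descFactorial 2 : ℝ) * (p ^ 2 * (1 - 2 * p) ^ (b - 2))) ^ 2 := by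
    intro i hi j hj hij
    let g : Fin 2 ⊕ Fin 2 → ℕ := Sum.elim (fun s => i + s * L b) (fun s => j + s * L b)
    have hinj : Function.Injective g := by
      rintro (s | s) (t | t) hst <;> fin_cases s <;> fin_cases t <;> simp [g] at hst ⊢ <;> omega
    have h := measureReal_pi_forall_ncard_eq_one (unif (Dhat o)) b
      (fun s => openCell o (δ b) (L b) (g s))
      (fun s => measurableSet_openCell _ _ _ _)
      (fun s t hst => pairwise_disjoint_openCell o (δ b) (L b) (hinj.ne hst)) p
      (by rintro (s | s) <;> refine hcell _ ?_ <;> fin_cases s <;> simp [g] <;> omega)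
    have hset : pairEvent o (δ b) b (L b) i ∩ pairEvent o (δ b) b (L b) j =
        {ω | ∀ s, Set.ncard {j | ω j ∈ openCell o (δ b) (L b) (g s)} = 1} := by
      ext ω
      simp only [Set.mem_ofPred_eq, Sum.forall]
      rfl
    rw [hset]
    refine le_trans (le_of_eq ?_) (descFactorial_four_mul_le hb4 hp0 hpb)
    simp only [Fintype.card_sum, Fintype.card_fin, Nat.reduceAdd, Nat.cast_ofNat] at h
    exact h
  have hmean := le_expected_pairs hb4 (by linarith) hxb hl hn_le hn0 hpn hpb
  set e : ℝ := (b.descFactorial 2 : ℝ) * (p ^ 2 * (1 - 2 * p) ^ (b - 2))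
  have hlow : 0 < x / (8 * l ^ 6) := by positivity
  have : IsProbabilityMeasure (ptsMeasure o b) := by
    unfold ptsMeasure
    infer_instance
  calc ptsMeasure o b {ω | (tau o b ω : ℝ) < x / (16 * l ^ 6)}
      ≤ ptsMeasure o b {ω | ∑ i ∈ Finset.range (L b),
          (pairEvent o (δ b) b (L b) i).indicator (fun _ => (1 : ℝ)) ω ≤ L b * e / 2} := by
        refine measure_mono_ae ?_
        filter_upwards [tau_eq_ae ho hL] with ω hω hlt
        change _ ≤ _
        change _ < _ at hlt
        rw [← hω]
        have h2 : x / (16 * l ^ 6) = x / (8 * l ^ 6) / 2 := by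
          field_simp
          norm_num
        linarith
    _ ≤ ENNReal.ofReal (4 / (L b * e)) :=
        measure_sum_indicator_le_half _ _ _ (fun i => measurableSet_pairEvent _ _ _ _ i) e hone
          htwo (hlow.trans_le hmean)
    _ ≤ ENNReal.ofReal (32 * l ^ 6 / x) := by
        refine ENNReal.ofReal_le_ofReal ?_
        calc 4 / (L b * e) ≤ 4 / (x / (8 * l ^ 6)) := by gcongr
          _ = 32 * l ^ 6 / x := by
            field_simp
            norm_num
end
end
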